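/- Let 1 ≤ q < ∞ and α, β ≥ 0. Then there exist constants c₁, c₂ > 0, depending only on q, α, β, such that for every n ∈ ℕ: c₁·n^{−1/q} ≤ E(M¹ ∩ B_{2q}^{α,β}, P_n)_{w_{α,β}, q} ≤ c₂·n^{−1/q}·[ln(n+1)]^{1/(2q)}. -/

import Mathlib

open MeasureTheory Set Filter
open scoped ENNReal

noncomputable section

/-- The Jacobi weight `w_{α,β}(x) = (1+x)^α (1-x)^β`. -/
def jacobi (α β : ℝ) (x : ℝ) : ℝ := (1 + x) ^ α * (1 - x) ^ β

/-- `φ(x) = √(1-x²)`. -/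
def phiW (x : ℝ) : ℝ := Real.sqrt (1 - x ^ 2)

/-- The `L^p` norm of `g` on the interval `[a,b]` (essential sup when `p = ∞`). -/
def LpOn (g : ℝ → ℝ) (p : ℝ≥0∞) (a b : ℝ) : ℝ≥0∞ :=
  eLpNorm g p (volume.restrict (Icc a b))

/-- The `k`-th symmetric difference `Δ_h^k(f,x)` relative to `[-1,1]`. -/
def symmDelta (k : ℕ) (h : ℝ) (f : ℝ → ℝ) (x : ℝ) : ℝ :=
  if (x - k * h / 2 ∈ Icc (-1 : ℝ) 1 ∧ x + k * h / 2 ∈ Icc (-1 : ℝ) 1) then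
    ∑ i ∈ Finset.range (k + 1), ((k.choose i : ℝ) * (-1 : ℝ) ^ (k - i) * f (x - k * h / 2 + i * h))
  else 0

/-- Main-part weighted modulus `Ω_φ^k(f,δ)_{w,p}`. -/
def OmegaMain (k : ℕ) (f : ℝ → ℝ) (δ : ℝ) (wt : ℝ → ℝ) (p : ℝ≥0∞) : ℝ≥0∞ :=
  ⨆ h ∈ Ioc (0 : ℝ) δ,
    LpOn (fun x => wt x * symmDelta k (h * phiW x) f x) p
      (-1 + 2 * (k : ℝ) ^ 2 * h ^ 2) (1 - 2 * (k : ℝ) ^ 2 * h ^ 2)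

/-- Forward part `Ω→_φ^k(f,δ)_{w,p}`. -/
def OmegaFwd (k : ℕ) (f : ℝ → ℝ) (δ : ℝ) (wt : ℝ → ℝ) (p : ℝ≥0∞) : ℝ≥0∞ :=
  ⨆ h ∈ Ioc (0 : ℝ) (2 * (k : ℝ) ^ 2 * δ ^ 2),
    LpOn (fun x => wt x * symmDelta k h f (x + k * h / 2)) p
      (-1) (-1 + 2 * (k : ℝ) ^ 2 * δ ^ 2)

/-- Backward part `Ω←_φ^k(f,δ)_{w,p}`. -/
def OmegaBwd (k : ℕ) (f : ℝ → ℝ) (δ : ℝ) (wt : ℝ → ℝ) (p : ℝ≥0∞) : ℝ≥0∞ :=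
  ⨆ h ∈ Ioc (0 : ℝ) (2 * (k : ℝ) ^ 2 * δ ^ 2),
    LpOn (fun x => wt x * symmDelta k h f (x - k * h / 2)) p
      (1 - 2 * (k : ℝ) ^ 2 * δ ^ 2) 1

/-- Weighted Ditzian–Totik modulus `ω_φ^k(f,δ)_{w,p}`. -/
def omegaDT (k : ℕ) (f : ℝ → ℝ) (δ : ℝ) (wt : ℝ → ℝ) (p : ℝ≥0∞) : ℝ≥0∞ :=
  OmegaMain k f δ wt p + OmegaFwd k f δ wt p + OmegaBwd k f δ wt p

/-- `f` is `k`-monotone on `(-1,1)`: all `k`-th divided differences over `k+1` distinct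
points of `(-1,1)` are nonnegative. -/
def kMonotoneOn (k : ℕ) (f : ℝ → ℝ) : Prop :=
  ∀ x : Fin (k + 1) → ℝ, Function.Injective x → (∀ i, x i ∈ Ioo (-1 : ℝ) 1) →
    0 ≤ ∑ i, f (x i) / ∏ j ∈ Finset.univ.erase i, (x i - x j)

/-- `M^k`, the class of `k`-monotone functions on `(-1,1)`. -/
def MSet (k : ℕ) : Set (ℝ → ℝ) := {f | kMonotoneOn k f}

/-- `M_+^k`, the `k`-monotone functions on `(-1,1)` vanishing on `(-1,0]`. -/
def MPlus (k : ℕ) : Set (ℝ → ℝ) :=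
  {f | kMonotoneOn k f ∧ ∀ x : ℝ, -1 < x → x ≤ 0 → f x = 0}

/-- `J_p = (-1/p, ∞)` for finite `p`, `[0,∞)` for `p = ∞`. -/
def Jset (p : ℝ≥0∞) : Set ℝ := if p = ∞ then Ici 0 else Ioi (-1 / p.toReal)

/-- `W_p^{α,β}`. -/
def WSet (p : ℝ≥0∞) (α β : ℝ) : Set (ℝ → ℝ) :=
  {f | Measurable f ∧ LpOn (fun x => jacobi α β x * f x) p (-1) 1 ≠ ⊤}

/-- `B_p^{α,β}`, the unit sphere of `W_p^{α,β}`. -/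
def BSet (p : ℝ≥0∞) (α β : ℝ) : Set (ℝ → ℝ) :=
  {f | Measurable f ∧ LpOn (fun x => jacobi α β x * f x) p (-1) 1 = 1}

/-- Best weighted approximation `E_n(f)_{w,q}` by polynomials of degree at most `n`. -/
def En (n : ℕ) (f : ℝ → ℝ) (wt : ℝ → ℝ) (q : ℝ≥0∞) : ℝ≥0∞ :=
  ⨅ P ∈ {P : Polynomial ℝ | P.natDegree ≤ n},
    LpOn (fun x => wt x * (f x - P.eval x)) q (-1) 1

/-- `E(X, P_n)_{w,q}`. -/
def EClass (X : Set (ℝ → ℝ)) (n : ℕ) (wt : ℝ → ℝ) (q : ℝ≥0∞) : ℝ≥0∞ :=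
  ⨆ f ∈ X, En n f wt q

lemma poly_disc (p : Polynomial ℂ) (B : ℝ) (h : ∀ z : ℂ, ‖z‖ = 1 → ‖p.eval z‖ ≤ B)
    (z : ℂ) (hz : ‖z‖ ≤ 1) : ‖p.eval z‖ ≤ B := by
  refine Complex.norm_le_of_forall_mem_frontier_norm_le (f := fun z => p.eval z)
    (U := Metric.ball (0:ℂ) 1) Metric.isBounded_ball p.differentiable.diffContOnCl ?_ ?_
  · intro z hz
    rw [frontier_ball _ one_ne_zero] at hz
    exact h z (by simpa using hz)
  · rw [closure_ball _ one_ne_zero]; simpa using hz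

lemma poly_growth (p : Polynomial ℂ) (m : ℕ) (hp : p.natDegree ≤ m) (B : ℝ)
    (h : ∀ z : ℂ, ‖z‖ = 1 → ‖p.eval z‖ ≤ B)
    (z : ℂ) (hz : 1 ≤ ‖z‖) : ‖p.eval z‖ ≤ B * ‖z‖ ^ m := by
  have key : ∀ z : ℂ, z ≠ 0 → (p.reflect m).eval z⁻¹ * z ^ m = p.eval z := by
    intro z hz
    let _ := invertibleOfNonzero hz
    have := Polynomial.eval₂_reflect_mul_pow (RingHom.id ℂ) z m p hp
    simpa [Polynomial.eval₂_id] using this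
  have hz0 : z ≠ 0 := by rintro rfl; simp at hz; linarith
  rw [← key z hz0, norm_mul, norm_pow]
  gcongr
  apply poly_disc
  · intro u hu
    have hu0 : u ≠ 0 := by rintro rfl; simp at hu
    have := key u⁻¹ (inv_ne_zero hu0)
    have h2 := h u⁻¹ (by simp [hu])
    rw [← this, norm_mul, norm_pow, norm_inv, hu, inv_inv] at h2
    simpa using h2
  · rw [norm_inv]; exact inv_le_one_of_one_le₀ hz

lemma trig_growth (Q : Polynomial ℝ) (m : ℕ) (hQ : Q.natDegree ≤ m) (B : ℝ)
    (h : ∀ θ : ℝ, |Q.eval (Real.sin θ)| ≤ B) (z : ℂ) :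
    ‖(Q.map (algebraMap ℝ ℂ)).eval (Complex.sin z)‖ ≤ B * Real.exp (m * |z.im|) := by
  set Qc := Q.map (algebraMap ℝ ℂ)
  have hB : 0 ≤ B := (abs_nonneg _).trans (h 0)
  set p : Polynomial ℂ := ∑ j ∈ Finset.range (m+1),
    Polynomial.C (Qc.coeff j) * (Polynomial.X ^ (m - j) *
      (Polynomial.C (1/(2*Complex.I)) * (Polynomial.X ^ 2 - 1)) ^ j) with hp
  have hdeg : p.natDegree ≤ 2 * m := by
    apply Polynomial.natDegree_sum_le_of_forall_le
    intro j hj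
    have hj : j ≤ m := by simpa [Nat.lt_succ_iff] using hj
    refine (Polynomial.natDegree_C_mul_le _ _).trans (Polynomial.natDegree_mul_le.trans ?_)
    have h1 : (Polynomial.X ^ (m - j) : Polynomial ℂ).natDegree ≤ m - j :=
      Polynomial.natDegree_X_pow_le _
    have h3 : (Polynomial.X ^ 2 - 1 : Polynomial ℂ).natDegree ≤ 2 := by
      compute_degree
    have h2 : ((Polynomial.C (1/(2*Complex.I)) * (Polynomial.X ^ 2 - 1 : Polynomial ℂ)) ^ j).natDegree ≤ j * 2 := by
      refine Polynomial.natDegree_pow_le.trans ?_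
      exact Nat.mul_le_mul_left _ ((Polynomial.natDegree_C_mul_le _ _).trans h3)
    omega
  have hval : ∀ z : ℂ, p.eval (Complex.exp (z * Complex.I)) =
      Complex.exp (z * Complex.I) ^ m * Qc.eval (Complex.sin z) := by
    intro z
    have hQc : Qc.natDegree < m + 1 := by
      have : Qc.natDegree ≤ Q.natDegree := Polynomial.natDegree_map_le
      omega
    rw [hp, Polynomial.eval_finsetSum, Polynomial.eval_eq_sum_range' hQc, Finset.mul_sum]
    refine Finset.sum_congr rfl fun j hj => ?_
    have hj : j ≤ m := by simpa [Nat.lt_succ_iff] using hj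
    have hs : Complex.sin z = (1/(2*Complex.I)) * (Complex.exp (z * Complex.I) ^ 2 - 1) / Complex.exp (z * Complex.I) := by
      have hne := Complex.exp_ne_zero (z * Complex.I)
      rw [Complex.sin, show -z * Complex.I = -(z*Complex.I) by ring, Complex.exp_neg]
      have hI := Complex.I_ne_zero
      have hI2 : Complex.I ^ 2 = -1 := Complex.I_sq
      field_simp
      rw [hI2]; ring
    simp only [Polynomial.eval_mul, Polynomial.eval_C, Polynomial.eval_pow, Polynomial.eval_X,
      Polynomial.eval_sub, Polynomial.eval_one]
    rw [hs, div_pow]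
    have hne := Complex.exp_ne_zero (z * Complex.I)
    have : Complex.exp (z * Complex.I) ^ m = Complex.exp (z * Complex.I) ^ (m-j) * Complex.exp (z * Complex.I) ^ j := by
      rw [← pow_add]; congr 1; omega
    rw [this]
    field_simp
  have hcirc : ∀ u : ℂ, ‖u‖ = 1 → ‖p.eval u‖ ≤ B := by
    intro u hu
    obtain ⟨t, ht⟩ := (Complex.norm_eq_one_iff u).1 hu
    rw [← ht, hval, norm_mul, norm_pow, Complex.norm_exp_ofReal_mul_I, one_pow, one_mul,
      ← Complex.ofReal_sin, Polynomial.eval_map_algebraMap,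
      show (Real.sin t : ℂ) = algebraMap ℝ ℂ (Real.sin t) from rfl,
      Polynomial.aeval_algebraMap_apply]
    simpa using h t
  have hn : ‖Complex.exp (z * Complex.I)‖ = Real.exp (-z.im) := by
    rw [Complex.norm_exp]; simp
  have hv := congrArg norm (hval z)
  rw [norm_mul, norm_pow, hn] at hv
  have hv' : ‖Qc.eval (Complex.sin z)‖ = Real.exp (m * z.im) * ‖p.eval (Complex.exp (z * Complex.I))‖ := by
    rw [hv, ← mul_assoc, ← Real.exp_nat_mul, ← Real.exp_add]
    simp
  rw [hv']
  rcases le_total 0 z.im with hy | hy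
  · have := poly_disc p B hcirc (Complex.exp (z * Complex.I)) (by rw [hn]; simpa using hy)
    rw [abs_of_nonneg hy, mul_comm]
    gcongr
  · have := poly_growth p (2*m) hdeg B hcirc (Complex.exp (z * Complex.I)) (by rw [hn]; simpa using hy)
    rw [abs_of_nonpos hy]
    rw [hn] at this
    calc _ ≤ Real.exp (m * z.im) * (B * Real.exp (-z.im) ^ (2*m)) := by gcongr
      _ = B * (Real.exp (m * z.im) * Real.exp (-z.im) ^ (2*m)) := by ring
      _ ≤ _ := by
        rw [← Real.exp_nat_mul, ← Real.exp_add]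
        apply le_of_eq; congr 2; push_cast; ring

lemma trig_bernstein (Q : Polynomial ℝ) (m : ℕ) (hm : 1 ≤ m) (hQ : Q.natDegree ≤ m) (B : ℝ)
    (h : ∀ θ : ℝ, |Q.eval (Real.sin θ)| ≤ B) (a b : ℝ) :
    |Q.eval (Real.sin b) - Q.eval (Real.sin a)| ≤ 3 * m * B * |b - a| := by
  have hB : 0 ≤ B := (abs_nonneg _).trans (h 0)
  have hm0 : (0:ℝ) < m := by exact_mod_cast hm
  set T : ℂ → ℂ := fun z => (Q.map (algebraMap ℝ ℂ)).eval (Complex.sin z) with hT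
  have hTd : Differentiable ℂ T :=
    (Polynomial.differentiable (Q.map (algebraMap ℝ ℂ))).comp Complex.differentiable_sin
  have hT' : ∀ x : ℝ, ‖deriv T x‖ ≤ 3 * m * B := by
    intro x
    have : ‖deriv T x‖ ≤ (B * Real.exp 1) / (1/m) := by
      apply Complex.norm_deriv_le_of_forall_mem_sphere_norm_le (by positivity) hTd.diffContOnCl
      intro z hz
      refine (trig_growth Q m hQ B h z).trans ?_
      gcongr
      have : |z.im| ≤ 1/m := by
        have h1 : |(z - x).im| ≤ ‖z - x‖ := Complex.abs_im_le_norm _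
        have h2 : ‖z - x‖ = 1/m := by simpa [dist_eq_norm] using hz
        rw [h2] at h1; simpa using h1
      calc m * |z.im| ≤ m * (1/m) := by gcongr
        _ = 1 := by field_simp
    refine this.trans ?_
    have := Real.exp_one_lt_three
    rw [div_div_eq_mul_div, div_one]
    nlinarith [mul_nonneg hB hm0.le]
  have hd : ∀ x : ℝ, HasDerivAt (fun t : ℝ => T t) (deriv T x) x := fun x =>
    (hTd x).hasDerivAt.comp_ofReal
  have := Convex.norm_image_sub_le_of_norm_hasDerivWithin_le (s := univ) (C := 3*m*B)
    (fun x _ => (hd x).hasDerivWithinAt) (fun x _ => hT' x) convex_univ (mem_univ a) (mem_univ b)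
  have hTx : ∀ x : ℝ, T x = ((Q.eval (Real.sin x) : ℝ) : ℂ) := by
    intro x
    simp only [hT]
    rw [← Complex.ofReal_sin, Polynomial.eval_map_algebraMap,
      show (Real.sin x : ℂ) = algebraMap ℝ ℂ (Real.sin x) from rfl,
      Polynomial.aeval_algebraMap_apply]
    simp
  simp only [hTx] at this
  rw [← Complex.ofReal_sub, Complex.norm_real] at this
  simpa using this

/-- the step function -/
def stepF (x : ℝ) : ℝ := if 0 < x then 1 else -1

lemma abs_stepF (x : ℝ) : |stepF x| = 1 := by
  unfold stepF; split_ifs <;> simp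

lemma lower_core (k n : ℕ) (hn : 1 ≤ n) (P : Polynomial ℝ) (hP : P.natDegree ≤ n) :
    ∃ θ₁ θ₂ : ℝ, -(Real.pi/2) ≤ θ₁ ∧ θ₂ ≤ Real.pi/2 ∧ θ₂ - θ₁ = 1/(48*((n:ℝ)+2*k)) ∧
      ∀ θ ∈ Ioo θ₁ θ₂, 1/2 ≤ |stepF (Real.sin θ) - P.eval (Real.sin θ)| * (Real.cos θ ^ 2) ^ k := by
  set m : ℕ := n + 2 * k with hm
  have hmR : ((n:ℝ)+2*k) = (m:ℝ) := by rw [hm]; push_cast; ring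
  have hm1 : 1 ≤ m := by omega
  have hm1R : (1:ℝ) ≤ m := by exact_mod_cast hm1
  have hkm : (k:ℝ) ≤ m := by rw [← hmR]; have : (0:ℝ) ≤ n := by positivity
                             have : (0:ℝ) ≤ k := by positivity
                             linarith
  rw [hmR]
  set L : ℝ := 1/(48*(m:ℝ)) with hL
  have hL0 : 0 < L := by positivity
  have hmL : m * L = 1/48 := by rw [hL]; field_simp
  have hL1 : L ≤ 1/48 := by nlinarith
  have hpi := Real.pi_gt_three
  set Q : Polynomial ℝ := P * (1 - Polynomial.X ^ 2) ^ k with hQ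
  have hQd : Q.natDegree ≤ m := by
    refine Polynomial.natDegree_mul_le.trans ?_
    have h3 : (1 - Polynomial.X ^ 2 : Polynomial ℝ).natDegree ≤ 2 := by compute_degree
    have := (Polynomial.natDegree_pow_le (p := (1 - Polynomial.X ^ 2 : Polynomial ℝ)) (n := k)).trans
      (Nat.mul_le_mul_left k h3)
    omega
  have hQv : ∀ θ : ℝ, Q.eval (Real.sin θ) = P.eval (Real.sin θ) * (Real.cos θ ^ 2) ^ k := by
    intro θ
    simp [hQ, Real.cos_sq']
  have hS : ∀ θ : ℝ, |stepF (Real.sin θ) - P.eval (Real.sin θ)| * (Real.cos θ ^ 2) ^ k =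
      |stepF (Real.sin θ) * (Real.cos θ ^ 2) ^ k - Q.eval (Real.sin θ)| := by
    intro θ
    rw [hQv, ← sub_mul, abs_mul, abs_of_nonneg (by positivity : (0:ℝ) ≤ (Real.cos θ ^ 2) ^ k)]
  simp only [hS]
  have hc : Continuous fun θ : ℝ => |Q.eval (Real.sin θ)| := by fun_prop
  obtain ⟨θ₀, hθ₀, hmax⟩ := isCompact_Icc.exists_isMaxOn
    (s := Icc (-(Real.pi/2)) (Real.pi/2)) ⟨0, by constructor <;> linarith⟩ hc.continuousOn
  set B := |Q.eval (Real.sin θ₀)| with hB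
  have hBall : ∀ θ : ℝ, |Q.eval (Real.sin θ)| ≤ B := by
    intro θ
    have h1 := hmax (a := Real.arcsin (Real.sin θ)) ⟨Real.neg_pi_div_two_le_arcsin _, Real.arcsin_le_pi_div_two _⟩
    simpa [Real.sin_arcsin (Real.neg_one_le_sin θ) (Real.sin_le_one θ)] using h1
  have hB0 : 0 ≤ B := abs_nonneg _
  have hlip : ∀ a b : ℝ, |b - a| ≤ L → |Q.eval (Real.sin b) - Q.eval (Real.sin a)| ≤ B / 16 := by
    intro a b hab
    refine (trig_bernstein Q m hm1 hQd B hBall a b).trans ?_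
    calc 3 * m * B * |b - a| ≤ 3 * m * B * L := by gcongr
      _ = 3 * B * (m * L) := by ring
      _ = B/16 := by rw [hmL]; ring
  have hSle : ∀ θ : ℝ, |stepF (Real.sin θ) * (Real.cos θ ^ 2) ^ k| ≤ 1 := by
    intro θ
    rw [abs_mul, abs_stepF, one_mul, abs_of_nonneg (by positivity)]
    exact pow_le_one₀ (by positivity) (Real.cos_sq_le_one θ)
  rcases le_or_gt 4 B with h4 | h4
  · have hfin : ∀ θ, |θ - θ₀| ≤ L → 1/2 ≤ |stepF (Real.sin θ) * (Real.cos θ ^ 2) ^ k - Q.eval (Real.sin θ)| := by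
      intro θ hθ
      have h1 := hlip θ₀ θ hθ
      have h2 := hSle θ
      have h3 := abs_sub_abs_le_abs_sub (Q.eval (Real.sin θ₀)) (Q.eval (Real.sin θ))
      have h4 := abs_sub_abs_le_abs_sub (Q.eval (Real.sin θ)) (stepF (Real.sin θ) * (Real.cos θ ^ 2) ^ k)
      rw [abs_sub_comm] at h1
      rw [abs_sub_comm]
      rw [← hB] at h3
      linarith
    rcases le_total θ₀ 0 with h0 | h0
    · refine ⟨θ₀, θ₀ + L, hθ₀.1, by linarith, by ring, fun θ hθ => hfin θ ?_⟩
      rw [abs_le]; constructor <;> linarith [hθ.1, hθ.2]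
    · refine ⟨θ₀ - L, θ₀, by linarith, hθ₀.2, by ring, fun θ hθ => hfin θ ?_⟩
      rw [abs_le]; constructor <;> linarith [hθ.1, hθ.2]
  · have hcos : ∀ θ, |θ| ≤ L → 3/4 ≤ (Real.cos θ ^ 2) ^ k := by
      intro θ hθ
      have h1 : 1 - θ ^ 2 ≤ Real.cos θ ^ 2 := by
        rw [Real.cos_sq']
        have := Real.abs_sin_le_abs (x := θ)
        have := sq_le_sq.2 this
        linarith
      have h2 : θ^2 ≤ L^2 := by rw [← sq_abs]; gcongr
      have h3 : L^2 ≤ L * (1/48) := by nlinarith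
      have h5 : (1 + k * (-θ^2)) ≤ (1 + -θ^2)^k := one_add_mul_le_pow (by nlinarith) k
      have h6 : (1 + -θ^2)^k ≤ (Real.cos θ ^ 2) ^ k := by
        apply pow_le_pow_left₀ <;> nlinarith
      have h7 : k * θ^2 ≤ m * (L * (1/48)) := by
        apply mul_le_mul hkm (h2.trans h3) (by positivity) (by positivity)
      nlinarith
    rcases le_total (Q.eval (Real.sin 0)) 0 with h0 | h0
    · refine ⟨0, L, by linarith, by linarith, by ring, fun θ hθ => ?_⟩
      have ha : |θ| ≤ L := by rw [abs_of_pos hθ.1]; exact hθ.2.le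
      have h1 := hlip 0 θ (by simpa using ha)
      have h2 := hcos θ ha
      have h3 : stepF (Real.sin θ) = 1 := by
        have := Real.sin_pos_of_pos_of_lt_pi hθ.1 (by linarith [hθ.2])
        simp [stepF, this]
      rw [h3, one_mul]
      have h5 := le_abs_self (Q.eval (Real.sin θ) - Q.eval (Real.sin 0))
      refine le_trans ?_ (le_abs_self _)
      linarith
    · refine ⟨-L, 0, by linarith, by linarith, by ring, fun θ hθ => ?_⟩
      have ha : |θ| ≤ L := by rw [abs_of_neg hθ.2]; linarith [hθ.1]
      have h1 := hlip 0 θ (by simpa using ha)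
      have h2 := hcos θ ha
      have h3 : stepF (Real.sin θ) = -1 := by
        have := Real.sin_neg_of_neg_of_neg_pi_lt hθ.2 (by linarith [hθ.1])
        simp [stepF, this.le]
      rw [h3]
      have h5 := neg_abs_le (Q.eval (Real.sin θ) - Q.eval (Real.sin 0))
      refine le_trans ?_ (neg_le_abs _)
      linarith

lemma jacobi_sin_lower (α β : ℝ) (hα : 0 ≤ α) (hβ : 0 ≤ β) (θ : ℝ) (h : 0 < Real.cos θ) :
    (1/2:ℝ)^(α+β) * (Real.cos θ ^ 2)^(α+β) ≤ jacobi α β (Real.sin θ) := by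
  have hc : Real.cos θ ^ 2 = (1 + Real.sin θ) * (1 - Real.sin θ) := by rw [Real.cos_sq']; ring
  have h1 := Real.neg_one_le_sin θ
  have h2 := Real.sin_le_one θ
  rw [← Real.mul_rpow (by norm_num) (by positivity), Real.rpow_add (by positivity), jacobi]
  gcongr
  · exact Real.rpow_nonneg (by linarith) _
  · rw [hc]; nlinarith
  · rw [hc]; nlinarith

lemma lower_int (p : ℝ) (hp : 1 ≤ p) (α β : ℝ) (hα : 0 ≤ α) (hβ : 0 ≤ β) :
    ∃ c : ℝ, 0 < c ∧ ∀ n : ℕ, 1 ≤ n → ∀ P : Polynomial ℝ, P.natDegree ≤ n →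
      ENNReal.ofReal (c / n) ≤
        ∫⁻ x in Icc (-1:ℝ) 1, ENNReal.ofReal (|jacobi α β x * (stepF x - P.eval x)| ^ p) := by
  obtain ⟨k, hk⟩ := exists_nat_ge (α + β + 1)
  refine ⟨((1/2:ℝ)^(α+β))^p * (1/2)^p * (1/(48*(1+2*k))), by positivity, ?_⟩
  intro n hn P hP
  have hn1 : (1:ℝ) ≤ n := by exact_mod_cast hn
  obtain ⟨a, b, ha, hb, hab, hθ⟩ := lower_core k n hn P hP
  have hsub : Real.sin '' Ioo a b ⊆ Icc (-1) 1 := by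
    rintro _ ⟨t, _, rfl⟩; exact ⟨Real.neg_one_le_sin t, Real.sin_le_one t⟩
  refine le_trans ?_ (lintegral_mono_set hsub)
  have hinj : InjOn Real.sin (Ioo a b) := Real.injOn_sin.mono (by
    intro t ht
    exact ⟨by linarith [ht.1], by linarith [ht.2]⟩)
  rw [lintegral_image_eq_lintegral_abs_deriv_mul measurableSet_Ioo
    (fun x _ => (Real.hasDerivAt_sin x).hasDerivWithinAt) hinj]
  have hpt : ∀ t ∈ Ioo a b, ENNReal.ofReal (((1/2:ℝ)^(α+β))^p * (1/2)^p) ≤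
      ENNReal.ofReal |Real.cos t| * ENNReal.ofReal
        (|jacobi α β (Real.sin t) * (stepF (Real.sin t) - P.eval (Real.sin t))| ^ p) := by
    intro t ht
    have hc : 0 < Real.cos t := Real.cos_pos_of_mem_Ioo ⟨by linarith [ht.1], by linarith [ht.2]⟩
    have hc1 := Real.cos_le_one t
    rw [← ENNReal.ofReal_mul (abs_nonneg _)]
    apply ENNReal.ofReal_le_ofReal
    have h1 := jacobi_sin_lower α β hα hβ t hc
    have h2 := hθ t ht
    set D := |stepF (Real.sin t) - P.eval (Real.sin t)| with hD
    have hD0 : 0 ≤ D := abs_nonneg _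
    have hj0 : 0 ≤ jacobi α β (Real.sin t) := le_trans (by positivity) h1
    rw [abs_mul, abs_of_pos hc, abs_of_nonneg hj0, ← hD]
    have hexp : ((Real.cos t ^ 2) ^ k) ^ p ≤ Real.cos t * ((Real.cos t ^ 2)^(α+β))^p := by
      have e1 : ((Real.cos t ^ 2) ^ k) ^ p = Real.cos t ^ (2 * k * p) := by
        rw [← pow_mul, ← Real.rpow_natCast, ← Real.rpow_mul hc.le]; push_cast; rfl
      have e2 : Real.cos t * ((Real.cos t ^ 2)^(α+β))^p = Real.cos t ^ (1 + 2 * (α+β) * p) := by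
        rw [Real.rpow_add hc, Real.rpow_one, ← Real.rpow_natCast, ← Real.rpow_mul hc.le,
          ← Real.rpow_mul hc.le]; push_cast; rfl
      rw [e1, e2]
      apply Real.rpow_le_rpow_of_exponent_ge hc hc1
      nlinarith
    calc ((1/2:ℝ)^(α+β))^p * (1/2)^p
        ≤ ((1/2:ℝ)^(α+β))^p * (D * (Real.cos t ^ 2) ^ k) ^ p := by gcongr
      _ = ((1/2:ℝ)^(α+β))^p * (((Real.cos t ^ 2) ^ k) ^ p * D ^ p) := by
          rw [Real.mul_rpow hD0 (by positivity)]; ring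
      _ ≤ ((1/2:ℝ)^(α+β))^p * ((Real.cos t * ((Real.cos t ^ 2)^(α+β))^p) * D ^ p) := by gcongr
      _ = Real.cos t * (((1/2:ℝ)^(α+β) * (Real.cos t ^ 2)^(α+β))^p * D^p) := by
          rw [Real.mul_rpow (by positivity) (by positivity)]; ring
      _ ≤ Real.cos t * ((jacobi α β (Real.sin t))^p * D^p) := by gcongr
      _ = _ := by rw [← Real.mul_rpow hj0 hD0]
  calc _ ≤ ENNReal.ofReal (((1/2:ℝ)^(α+β))^p * (1/2)^p) * volume (Ioo a b) := by
        rw [Real.volume_Ioo, hab, ← ENNReal.ofReal_mul (by positivity)]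
        apply ENNReal.ofReal_le_ofReal
        rw [mul_div_assoc, div_div]
        refine mul_le_mul_of_nonneg_left (one_div_le_one_div_of_le (by positivity) ?_) (by positivity)
        have : (0:ℝ) ≤ k := by positivity
        nlinarith
    _ = ∫⁻ t in Ioo a b, ENNReal.ofReal (((1/2:ℝ)^(α+β))^p * (1/2)^p) := by
        rw [setLIntegral_const]
    _ ≤ _ := setLIntegral_mono' measurableSet_Ioo hpt

lemma LpOn_eq (g : ℝ → ℝ) (q : ℝ≥0∞) (hq0 : q ≠ 0) (hq : q ≠ ∞) (a b : ℝ) :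
    LpOn g q a b = (∫⁻ x in Icc a b, ENNReal.ofReal (|g x| ^ q.toReal)) ^ (1 / q.toReal) := by
  rw [LpOn, eLpNorm_eq_lintegral_rpow_enorm_toReal hq0 hq]
  congr 1
  refine lintegral_congr fun x => ?_
  rw [Real.enorm_eq_ofReal_abs, ENNReal.ofReal_rpow_of_nonneg (abs_nonneg _) ENNReal.toReal_nonneg]

lemma lower_LpOn (q : ℝ≥0∞) (hq1 : 1 ≤ q) (hq2 : q ≠ ∞)
    (α β : ℝ) (hα : 0 ≤ α) (hβ : 0 ≤ β) :
    ∃ c : ℝ, 0 < c ∧ ∀ n : ℕ, 1 ≤ n → ∀ P : Polynomial ℝ, P.natDegree ≤ n →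
      ENNReal.ofReal (c * (n:ℝ) ^ (-(1 / q.toReal))) ≤
        LpOn (fun x => jacobi α β x * (stepF x - P.eval x)) q (-1) 1 := by
  have hp : 1 ≤ q.toReal := by
    have := ENNReal.toReal_mono hq2 hq1; simpa using this
  obtain ⟨c, hc, h⟩ := lower_int q.toReal hp α β hα hβ
  refine ⟨c ^ (1/q.toReal), by positivity, fun n hn P hP => ?_⟩
  rw [LpOn_eq _ _ (by positivity) hq2]
  refine le_trans (le_of_eq ?_) (ENNReal.rpow_le_rpow (h n hn P hP) (by positivity))
  rw [ENNReal.ofReal_rpow_of_nonneg (by positivity) (by positivity),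
    Real.div_rpow hc.le (by positivity), Real.rpow_neg (by positivity)]
  rfl

lemma jacobi_continuous (α β : ℝ) (hα : 0 ≤ α) (hβ : 0 ≤ β) : Continuous (jacobi α β) := by
  unfold jacobi
  exact ((continuous_const.add continuous_id).rpow_const (fun _ => Or.inr hα)).mul
    ((continuous_const.sub continuous_id).rpow_const (fun _ => Or.inr hβ))

lemma measurable_stepF : Measurable stepF :=
  Measurable.ite (measurableSet_lt measurable_const measurable_id) measurable_const measurable_const

lemma monotone_stepF : Monotone stepF := by
  intro a b hab
  unfold stepF
  split_ifs with h1 h2 <;> linarith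

lemma mset_of_monotone (f : ℝ → ℝ) (hf : Monotone f) : f ∈ MSet 1 := by
  intro x hx _
  have e0 : (Finset.univ.erase (0 : Fin 2)) = {1} := by decide
  have e1 : (Finset.univ.erase (1 : Fin 2)) = {0} := by decide
  rw [Fin.sum_univ_two]
  simp only [e0, e1, Finset.prod_singleton]
  have hne : x 0 ≠ x 1 := fun h => absurd (hx h) (by decide)
  have : f (x 0) / (x 0 - x 1) + f (x 1) / (x 1 - x 0) = (f (x 0) - f (x 1)) / (x 0 - x 1) := by
    have : x 0 - x 1 ≠ 0 := sub_ne_zero.2 hne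
    have : x 1 - x 0 ≠ 0 := sub_ne_zero.2 hne.symm
    field_simp
    ring
  rw [this]
  rcases lt_or_gt_of_ne hne with h | h
  · exact div_nonneg_of_nonpos (by linarith [hf h.le]) (by linarith)
  · exact div_nonneg (by linarith [hf h.le]) (by linarith)

lemma monotone_of_mset (f : ℝ → ℝ) (hf : f ∈ MSet 1) (a b : ℝ) (ha : a ∈ Ioo (-1:ℝ) 1)
    (hb : b ∈ Ioo (-1:ℝ) 1) (hab : a ≤ b) : f a ≤ f b := by
  rcases hab.eq_or_lt with h | h
  · rw [h]
  have := hf ![a, b] (by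
    intro i j hij
    fin_cases i <;> fin_cases j <;> simp_all) (by
    intro i; fin_cases i <;> simp_all)
  have e0 : (Finset.univ.erase (0 : Fin 2)) = {1} := by decide
  have e1 : (Finset.univ.erase (1 : Fin 2)) = {0} := by decide
  rw [Fin.sum_univ_two] at this
  simp only [e0, e1, Finset.prod_singleton] at this
  simp only [Matrix.cons_val_zero, Matrix.cons_val_one] at this
  have h2 : f a / (a - b) + f b / (b - a) = (f b - f a) / (b - a) := by
    have : a - b ≠ 0 := by linarith
    have : b - a ≠ 0 := by linarith
    field_simp
    ring
  rw [h2] at this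
  have h3 : 0 < b - a := by linarith
  have := (div_nonneg_iff.1 this)
  rcases this with h | h <;> linarith

lemma lower_final (q : ℝ≥0∞) (hq1 : 1 ≤ q) (hq2 : q ≠ ∞)
    (α β : ℝ) (hα : 0 ≤ α) (hβ : 0 ≤ β) :
    ∃ c : ℝ, 0 < c ∧ ∀ n : ℕ, 1 ≤ n →
      ENNReal.ofReal (c * (n:ℝ) ^ (-(1 / q.toReal))) ≤
        EClass (MSet 1 ∩ BSet (2 * q) α β) n (jacobi α β) q := by
  obtain ⟨c, hc, h⟩ := lower_LpOn q hq1 hq2 α β hα hβ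
  set N := LpOn (fun x => jacobi α β x * stepF x) (2*q) (-1) 1 with hN
  have hNtop : N ≠ ⊤ := by
    have hcj := (jacobi_continuous α β hα hβ)
    obtain ⟨C, hC⟩ := (isCompact_Icc (a := (-1:ℝ)) (b := 1)).exists_bound_of_continuousOn hcj.continuousOn
    refine ne_of_lt (lt_of_le_of_lt (eLpNorm_le_of_ae_bound (C := C) ?_) ?_)
    · refine (ae_restrict_mem measurableSet_Icc).mono fun x hx => ?_
      rw [norm_mul, Real.norm_eq_abs (stepF x), abs_stepF, mul_one]
      exact hC x hx
    · refine ENNReal.mul_lt_top (ENNReal.rpow_lt_top_of_nonneg (by positivity) ?_) ENNReal.ofReal_lt_top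
      simp
  have hN0 : N ≠ 0 := by
    intro h0
    have hmeas : Measurable (fun x => jacobi α β x * stepF x) :=
      (jacobi_continuous α β hα hβ).measurable.mul measurable_stepF
    rw [hN, LpOn, eLpNorm_eq_zero_iff hmeas.aestronglyMeasurable (by positivity)] at h0
    have h1 : ∀ᵐ x ∂(volume.restrict (Icc (-1:ℝ) 1)), x = 1 ∨ x = -1 := by
      filter_upwards [h0, ae_restrict_mem measurableSet_Icc] with x hx hx2
      by_contra hcon
      push Not at hcon
      have h3 : 0 < 1 + x := by
        rcases hx2.1.eq_or_lt with h | h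
        · exact absurd h.symm hcon.2
        · linarith
      have h4 : 0 < 1 - x := by
        rcases hx2.2.eq_or_lt with h | h
        · exact absurd h hcon.1
        · linarith
      have : 0 < |jacobi α β x * stepF x| := by
        rw [abs_mul, abs_stepF, mul_one, abs_pos, jacobi]; positivity
      rw [show jacobi α β x * stepF x = 0 from hx] at this
      simp at this
    rw [ae_restrict_iff' measurableSet_Icc] at h1
    have h2 : ∀ᵐ x : ℝ, x ≠ 1 ∧ x ≠ -1 :=
      (Measure.ae_ne volume 1).and (Measure.ae_ne volume (-1))
    have h3 : ∀ᵐ x : ℝ, x ∉ Icc (-1:ℝ) 1 := by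
      filter_upwards [h1, h2] with x hx hx2 hx3
      rcases hx hx3 with h | h
      · exact hx2.1 h
      · exact hx2.2 h
    have : volume (Icc (-1:ℝ) 1) = 0 := measure_eq_zero_iff_ae_notMem.2 h3
    rw [Real.volume_Icc] at this
    norm_num at this
  have hNr : 0 < N.toReal := ENNReal.toReal_pos hN0 hNtop
  set A := N.toReal⁻¹ with hA
  have hA0 : 0 < A := by positivity
  refine ⟨A * c, by positivity, fun n hn => ?_⟩
  have hscale : ∀ (g : ℝ → ℝ) (r : ℝ≥0∞), LpOn (fun x => A * g x) r (-1) 1 = ENNReal.ofReal A * LpOn g r (-1) 1 := by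
    intro g r
    have := eLpNorm_const_smul A g r (volume.restrict (Icc (-1:ℝ) 1))
    rw [Real.enorm_eq_ofReal hA0.le] at this
    exact this
  have hmem : (fun x => A * stepF x) ∈ MSet 1 ∩ BSet (2 * q) α β := by
    refine ⟨mset_of_monotone _ (monotone_stepF.const_mul hA0.le), measurable_stepF.const_mul A, ?_⟩
    have : (fun x => jacobi α β x * (A * stepF x)) = fun x => A * (jacobi α β x * stepF x) := by
      funext x; ring
    rw [this, hscale, ← hN, hA, ENNReal.ofReal_inv_of_pos hNr, ENNReal.ofReal_toReal hNtop,
      ENNReal.inv_mul_cancel hN0 hNtop]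
  refine le_trans ?_ (le_iSup₂_of_le (f := fun f (_ : f ∈ MSet 1 ∩ BSet (2 * q) α β) => En n f (jacobi α β) q) _ hmem le_rfl)
  refine le_iInf₂ fun P hP => ?_
  have e : (fun x => jacobi α β x * (A * stepF x - P.eval x)) =
      fun x => A * (jacobi α β x * (stepF x - (Polynomial.C A⁻¹ * P).eval x)) := by
    funext x
    simp only [Polynomial.eval_mul, Polynomial.eval_C]
    field_simp
  rw [e, hscale (fun x => jacobi α β x * (stepF x - (Polynomial.C A⁻¹ * P).eval x)), mul_assoc A, ENNReal.ofReal_mul hA0.le]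
  gcongr
  exact h n hn _ ((Polynomial.natDegree_C_mul_le _ _).trans hP)

/-- even trigonometric polynomials of degree at most `n` -/
def CP (n : ℕ) : Submodule ℝ (ℝ → ℝ) :=
  Submodule.span ℝ {g | ∃ k : ℕ, k ≤ n ∧ g = fun t => Real.cos (k * t)}

lemma cos_mem_CP (k n : ℕ) (h : k ≤ n) : (fun t : ℝ => Real.cos (k * t)) ∈ CP n :=
  Submodule.subset_span ⟨k, h, rfl⟩

lemma CP_cos_mul_cos (k l n : ℕ) (h : k + l ≤ n) :
    (fun t : ℝ => Real.cos (k * t) * Real.cos (l * t)) ∈ CP n := by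
  wlog hkl : l ≤ k generalizing k l
  · have := this l k (by omega) (by omega)
    simpa only [mul_comm] using this
  have : (fun t : ℝ => Real.cos (k * t) * Real.cos (l * t)) =
      (1/2:ℝ) • ((fun t : ℝ => Real.cos ((k+l : ℕ) * t)) + fun t : ℝ => Real.cos ((k-l : ℕ) * t)) := by
    funext t
    simp only [Pi.smul_apply, Pi.add_apply, smul_eq_mul]
    push_cast [Nat.cast_sub hkl]
    rw [add_mul, sub_mul, Real.cos_add, Real.cos_sub]; ring
  rw [this]
  exact Submodule.smul_mem _ _ (Submodule.add_mem _ (cos_mem_CP _ _ h) (cos_mem_CP _ _ (by omega)))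

lemma CP_mul (n m : ℕ) (f g : ℝ → ℝ) (hf : f ∈ CP n) (hg : g ∈ CP m) : f * g ∈ CP (n + m) := by
  induction hf using Submodule.span_induction with
  | zero => simp
  | add x y _ _ hx hy => rw [add_mul]; exact Submodule.add_mem _ hx hy
  | smul a x _ hx => rw [smul_mul_assoc]; exact Submodule.smul_mem _ _ hx
  | mem x hx =>
    obtain ⟨k, hk, rfl⟩ := hx
    induction hg using Submodule.span_induction with
    | zero => simp
    | add x y _ _ hx hy => rw [mul_add]; exact Submodule.add_mem _ hx hy
    | smul a x _ hx => rw [mul_smul_comm]; exact Submodule.smul_mem _ _ hx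
    | mem x hx =>
      obtain ⟨l, hl, rfl⟩ := hx
      exact CP_cos_mul_cos k l _ (by omega)

lemma CP_pow (n r : ℕ) (f : ℝ → ℝ) (hf : f ∈ CP n) : f ^ r ∈ CP (r * n) := by
  induction r with
  | zero =>
    have := cos_mem_CP 0 (0*n) (by omega)
    convert this using 1
    funext t; simp
  | succ r ih =>
    rw [pow_succ, Nat.succ_mul]
    exact CP_mul _ _ _ _ ih hf

lemma CP_mono {n m : ℕ} (h : n ≤ m) : CP n ≤ CP m :=
  Submodule.span_mono fun _ ⟨k, hk, e⟩ => ⟨k, hk.trans h, e⟩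

/-- Fejer type kernel -/
def Fe (N : ℕ) (t : ℝ) : ℝ := ‖∑ k ∈ Finset.range N, Complex.exp (Complex.I * t) ^ k‖ ^ 2

lemma Fe_nonneg (N : ℕ) (t : ℝ) : 0 ≤ Fe N t := by unfold Fe; positivity

lemma Fe_zero (N : ℕ) : Fe N 0 = (N:ℝ)^2 := by simp [Fe]

lemma Fe_le (N : ℕ) (t : ℝ) : Fe N t ≤ (N:ℝ)^2 := by
  unfold Fe
  gcongr
  refine (norm_sum_le _ _).trans ?_
  simp [mul_comm Complex.I, Complex.norm_exp_ofReal_mul_I]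

lemma Fe_le' (N : ℕ) (t : ℝ) : Fe N t * Real.sin (t/2) ^ 2 ≤ 1 := by
  unfold Fe
  have h := geom_sum_mul (Complex.exp (Complex.I * t)) N
  have h2 := congrArg norm h
  rw [norm_mul, Complex.norm_exp_I_mul_ofReal_sub_one] at h2
  have h3 : ‖Complex.exp (Complex.I * t) ^ N - 1‖ ≤ 2 := by
    refine (norm_sub_le _ _).trans ?_
    rw [norm_pow, mul_comm, Complex.norm_exp_ofReal_mul_I]; norm_num
  rw [← h2, norm_mul] at h3
  rw [← sq_abs (Real.sin (t/2)), ← mul_pow]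
  apply pow_le_one₀ (by positivity)
  simp only [Real.norm_eq_abs, Nat.abs_ofNat] at h3
  linarith

lemma Fe_CP (N n : ℕ) (h : N ≤ n + 1) : Fe N ∈ CP n := by
  have : Fe N = ∑ k ∈ Finset.range N, ∑ l ∈ Finset.range N,
      fun t : ℝ => Real.cos (((k - l) + (l - k) : ℕ) * t) := by
    funext t
    have hre : (∑ k ∈ Finset.range N, Complex.exp (Complex.I * t) ^ k).re =
        ∑ k ∈ Finset.range N, Real.cos (k * t) := by
      rw [Complex.re_sum]
      refine Finset.sum_congr rfl fun k _ => ?_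
      rw [← Complex.exp_nat_mul, show (k:ℂ) * (Complex.I * t) = ((k*t : ℝ) : ℂ) * Complex.I by push_cast; ring,
        Complex.exp_ofReal_mul_I_re]
    have him : (∑ k ∈ Finset.range N, Complex.exp (Complex.I * t) ^ k).im =
        ∑ k ∈ Finset.range N, Real.sin (k * t) := by
      rw [Complex.im_sum]
      refine Finset.sum_congr rfl fun k _ => ?_
      rw [← Complex.exp_nat_mul, show (k:ℂ) * (Complex.I * t) = ((k*t : ℝ) : ℂ) * Complex.I by push_cast; ring,
        Complex.exp_ofReal_mul_I_im]
    rw [Fe, ← Complex.normSq_eq_norm_sq, Complex.normSq_apply, hre, him]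
    simp only [Finset.sum_apply, Finset.sum_mul_sum]
    rw [← Finset.sum_add_distrib]
    refine Finset.sum_congr rfl fun k _ => ?_
    rw [← Finset.sum_add_distrib]
    refine Finset.sum_congr rfl fun l _ => ?_
    rw [← Real.cos_sub, ← sub_mul]
    rcases le_total l k with hkl | hkl
    · rw [show (k - l) + (l - k) = k - l by omega, Nat.cast_sub hkl]
    · rw [show (k - l) + (l - k) = l - k by omega, Nat.cast_sub hkl, ← Real.cos_neg]; congr 1; ring
  rw [this]
  refine Submodule.sum_mem _ fun k hk => Submodule.sum_mem _ fun l hl => cos_mem_CP _ _ ?_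
  simp only [Finset.mem_range] at hk hl
  omega

lemma CP_poly (n : ℕ) (J : ℝ → ℝ) (hJ : J ∈ CP n) (s : ℝ) :
    ∃ P : Polynomial ℝ, P.natDegree ≤ n ∧ ∀ θ : ℝ, P.eval (Real.cos θ) = J (θ - s) + J (θ + s) := by
  induction hJ using Submodule.span_induction with
  | zero => exact ⟨0, by simp, by simp⟩
  | add x y _ _ hx hy =>
    obtain ⟨P, hP, h1⟩ := hx
    obtain ⟨Q, hQ, h2⟩ := hy
    refine ⟨P + Q, (Polynomial.natDegree_add_le _ _).trans (max_le hP hQ), fun θ => ?_⟩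
    rw [Polynomial.eval_add, h1, h2]; simp only [Pi.add_apply]; ring
  | smul a x _ hx =>
    obtain ⟨P, hP, h1⟩ := hx
    refine ⟨Polynomial.C a * P, (Polynomial.natDegree_C_mul_le _ _).trans hP, fun θ => ?_⟩
    rw [Polynomial.eval_mul, Polynomial.eval_C, h1]; simp only [Pi.smul_apply, smul_eq_mul]; ring
  | mem x hx =>
    obtain ⟨k, hk, rfl⟩ := hx
    refine ⟨Polynomial.C (2 * Real.cos (k * s)) * Polynomial.Chebyshev.T ℝ k,
      (Polynomial.natDegree_C_mul_le _ _).trans ?_, fun θ => ?_⟩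
    · rw [Polynomial.Chebyshev.natDegree_T]; simpa using hk
    · rw [Polynomial.eval_mul, Polynomial.eval_C, Polynomial.Chebyshev.T_real_cos]
      simp only [mul_sub, mul_add, Real.cos_add, Real.cos_sub]
      push_cast; ring

/-- Chebyshev nodes -/
def nd (M : ℕ) (j : ℕ) : ℝ := ((j:ℝ) + 1/2) * (Real.pi / M)

lemma sum_cos_nd (M k : ℕ) (hk : 0 < k) (hkM : k < 2 * M) :
    ∑ j ∈ Finset.range M, Real.cos (k * nd M j) = 0 := by
  have hM : (0:ℝ) < M := by
    have : 0 < M := by omega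
    exact_mod_cast this
  have hs : 0 < Real.sin (k * (Real.pi / M) / 2) := by
    apply Real.sin_pos_of_pos_of_lt_pi
    · have : (0:ℝ) < k := by exact_mod_cast hk
      have := Real.pi_pos
      positivity
    · have : (k:ℝ) < 2 * M := by exact_mod_cast hkM
      have hp := Real.pi_pos
      rw [mul_div_assoc', div_div, div_lt_iff₀ (by positivity)]
      nlinarith
  have key : ∀ m : ℕ, 2 * Real.sin (k * (Real.pi / M) / 2) * ∑ j ∈ Finset.range m, Real.cos (k * nd M j) =
      Real.sin (m * (k * (Real.pi/M))) := by
    intro m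
    induction m with
    | zero => simp
    | succ m ih =>
      rw [Finset.sum_range_succ, mul_add, ih]
      have e1 : ((m+1 : ℕ):ℝ) * (k * (Real.pi/M)) = k * nd M m + k * (Real.pi / M) / 2 := by
        unfold nd; push_cast; ring
      have e2 : (m:ℝ) * (k * (Real.pi/M)) = k * nd M m - k * (Real.pi / M) / 2 := by
        unfold nd; ring
      rw [e1, e2, Real.sin_add, Real.sin_sub]; ring
  have h := key M
  rw [show (M:ℝ) * (k * (Real.pi / M)) = k * Real.pi by field_simp, Real.sin_nat_mul_pi] at h
  rcases mul_eq_zero.1 h with h | h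
  · linarith
  · exact h

lemma CP_sum (n M : ℕ) (hM : n < 2 * M) (J : ℝ → ℝ) (hJ : J ∈ CP n) :
    ∃ S : ℝ, ∀ θ : ℝ, ∑ j ∈ Finset.range M, (J (θ - nd M j) + J (θ + nd M j)) = S := by
  induction hJ using Submodule.span_induction with
  | zero => exact ⟨0, by simp⟩
  | add x y _ _ hx hy =>
    obtain ⟨S, h1⟩ := hx
    obtain ⟨S', h2⟩ := hy
    refine ⟨S + S', fun θ => ?_⟩
    rw [← h1 θ, ← h2 θ, ← Finset.sum_add_distrib]
    refine Finset.sum_congr rfl fun j _ => ?_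
    simp only [Pi.add_apply]; ring
  | smul a x _ hx =>
    obtain ⟨S, h1⟩ := hx
    refine ⟨a * S, fun θ => ?_⟩
    rw [← h1 θ, Finset.mul_sum]
    refine Finset.sum_congr rfl fun j _ => ?_
    simp only [Pi.smul_apply, smul_eq_mul]; ring
  | mem x hx =>
    obtain ⟨k, hk, rfl⟩ := hx
    rcases Nat.eq_zero_or_pos k with rfl | hk0
    · exact ⟨_, fun θ => by simp; rfl⟩
    · refine ⟨0, fun θ => ?_⟩
      have : ∀ j ∈ Finset.range M, Real.cos (k * (θ - nd M j)) + Real.cos (k * (θ + nd M j)) =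
          2 * Real.cos (k * θ) * Real.cos (k * nd M j) := by
        intro j _
        rw [mul_sub, mul_add, Real.cos_add, Real.cos_sub]; ring
      rw [Finset.sum_congr rfl this, ← Finset.mul_sum, sum_cos_nd M k hk0 (by omega), mul_zero]

lemma sin_lower (θ s : ℝ) (hθ : θ ∈ Icc 0 Real.pi) (hs : s ∈ Icc 0 Real.pi) :
    (|θ - s| / Real.pi)^2 ≤ Real.sin ((θ - s)/2)^2 ∧ (|θ - s| / Real.pi)^2 ≤ Real.sin ((θ + s)/2)^2 := by
  have hp := Real.pi_pos
  obtain ⟨h1, h2⟩ := hθ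
  obtain ⟨h3, h4⟩ := hs
  constructor
  · have : Real.sin ((θ - s)/2)^2 = Real.sin (|θ - s|/2)^2 := by
      rcases abs_cases (θ - s) with h | h
      · rw [h.1]
      · rw [h.1, neg_div, Real.sin_neg, neg_sq]
    rw [this]
    have hle : |θ - s| ≤ Real.pi := abs_le.2 ⟨by linarith, by linarith⟩
    have := Real.mul_le_sin (x := |θ - s|/2) (by positivity) (by linarith)
    have e : 2 / Real.pi * (|θ - s|/2) = |θ - s| / Real.pi := by field_simp
    rw [e] at this
    gcongr
  · have habs : |θ - s| ≤ θ + s := abs_le.2 ⟨by linarith, by linarith⟩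
    have habs2 : |θ - s| ≤ 2 * Real.pi - θ - s := abs_le.2 ⟨by linarith, by linarith⟩
    rcases le_total (θ + s) Real.pi with h | h
    · have := Real.mul_le_sin (x := (θ + s)/2) (by linarith) (by linarith)
      have e : 2 / Real.pi * ((θ + s)/2) = (θ + s) / Real.pi := by field_simp
      rw [e] at this
      have h5 : |θ - s| / Real.pi ≤ (θ + s) / Real.pi := by gcongr
      have h6 := h5.trans this
      gcongr
    · have := Real.mul_le_sin (x := Real.pi - (θ + s)/2) (by linarith) (by linarith)
      rw [Real.sin_pi_sub] at this
      have e : 2 / Real.pi * (Real.pi - (θ + s)/2) = (2 * Real.pi - θ - s) / Real.pi := by field_simp; ring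
      rw [e] at this
      have h5 : |θ - s| / Real.pi ≤ (2 * Real.pi - θ - s) / Real.pi := by gcongr
      have h6 := h5.trans this
      gcongr

lemma Fe_bound (N M : ℕ) (hM : 0 < M) (hN : N ≤ M) (d σ : ℝ) (hd : 0 ≤ d) (hd2 : d = 0 ∨ 1 ≤ d)
    (hσ : (d - 1/2)/M ≤ σ) (t : ℝ) (ht : σ^2 ≤ Real.sin (t/2)^2) :
    Fe N t ≤ 16 * M^2 / (1+d)^2 := by
  have hMR : (0:ℝ) < M := by exact_mod_cast hM
  have hNR : (N:ℝ) ≤ M := by exact_mod_cast hN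
  rcases hd2 with rfl | h1
  · refine (Fe_le N t).trans ?_
    have : (N:ℝ)^2 ≤ M^2 := by gcongr
    norm_num; nlinarith
  · have h2 : (1+d)/(4*M) ≤ σ := by
      refine le_trans ?_ hσ
      rw [div_le_div_iff₀ (by positivity) hMR]
      nlinarith
    have h3 : ((1+d)/(4*M))^2 ≤ Real.sin (t/2)^2 := le_trans (by gcongr) ht
    have h4 := Fe_le' N t
    have h5 : Fe N t * ((1+d)/(4*M))^2 ≤ 1 := le_trans (by gcongr; exact Fe_nonneg N t) h4
    rw [le_div_iff₀ (by positivity)]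
    rw [div_pow, mul_div_assoc', div_le_one (by positivity)] at h5
    nlinarith

lemma abs_nat_cases (i j : ℕ) : |(i:ℝ) - j| = 0 ∨ 1 ≤ |(i:ℝ) - j| := by
  rcases eq_or_ne i j with h | h
  · left; simp [h]
  · right
    have : (i:ℤ) - j ≠ 0 := by omega
    have := Int.one_le_abs this
    exact_mod_cast this

lemma kernel (r : ℕ) (hr : 1 ≤ r) : ∃ C : ℝ, 0 < C ∧ ∀ n : ℕ, ∃ Λ : ℕ → Polynomial ℝ,
    (∀ j, (Λ j).natDegree ≤ n) ∧
    (∀ θ : ℝ, ∑ j ∈ Finset.range (2*(n+1)), (Λ j).eval (Real.cos θ) = 1) ∧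
    (∀ j, ∀ θ : ℝ, 0 ≤ (Λ j).eval (Real.cos θ)) ∧
    (∀ i j : ℕ, i < 2*(n+1) → j < 2*(n+1) → ∀ θ ∈ Icc ((i:ℝ) * (Real.pi/(2*(n+1) : ℕ)))
      (((i:ℝ)+1) * (Real.pi/(2*(n+1) : ℕ))),
      (Λ j).eval (Real.cos θ) ≤ C / (1 + |(i:ℝ) - j|)^(2*r)) := by
  have hrR : (0:ℝ) < r := by exact_mod_cast hr
  refine ⟨2 * (64 * r^2)^r, by positivity, fun n => ?_⟩
  set M := 2*(n+1) with hM
  set N := n / r + 1 with hN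
  have hMR : (0:ℝ) < M := by rw [hM]; positivity
  have hNR : (0:ℝ) < N := by rw [hN]; positivity
  have hNM : N ≤ M := by have := Nat.div_le_self n r; omega
  have hrN : (M:ℝ) ≤ 2 * (r * N) := by
    have : n + 1 ≤ r * N := Nat.lt_mul_div_succ n hr
    have h2 : M ≤ 2 * (r * N) := by omega
    exact_mod_cast h2
  set J : ℝ → ℝ := Fe N ^ r with hJ
  have hJ0 : ∀ t, 0 ≤ J t := fun t => pow_nonneg (Fe_nonneg N t) r
  have hJC : J ∈ CP n := by
    refine CP_mono ?_ (CP_pow (n / r) r (Fe N) (Fe_CP N (n/r) (by omega)))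
    exact Nat.mul_div_le n r
  obtain ⟨S, hS⟩ := CP_sum n M (by omega) J hJC
  choose Λ hΛd hΛ using fun j => CP_poly n J hJC (nd M j)
  have hSlow : (N:ℝ)^(2*r) ≤ S := by
    rw [← hS (nd M 0)]
    have h0 : (N:ℝ)^(2*r) ≤ J (nd M 0 - nd M 0) + J (nd M 0 + nd M 0) := by
      rw [sub_self]
      have : J 0 = (N:ℝ)^(2*r) := by simp [hJ, Fe_zero, pow_mul]
      rw [this]; linarith [hJ0 (nd M 0 + nd M 0)]
    refine h0.trans (Finset.single_le_sum (f := fun j => J (nd M 0 - nd M j) + J (nd M 0 + nd M j))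
      (fun j _ => add_nonneg (hJ0 _) (hJ0 _)) (Finset.mem_range.2 (by omega)))
  have hSpos : 0 < S := lt_of_lt_of_le (by positivity) hSlow
  refine ⟨fun j => Polynomial.C S⁻¹ * Λ j, fun j => (Polynomial.natDegree_C_mul_le _ _).trans (hΛd j), ?_, ?_, ?_⟩
  · intro θ
    simp only [Polynomial.eval_mul, Polynomial.eval_C, hΛ]
    rw [← Finset.mul_sum, hS, inv_mul_cancel₀ hSpos.ne']
  · intro j θ
    simp only [Polynomial.eval_mul, Polynomial.eval_C, hΛ]
    exact mul_nonneg (by positivity) (add_nonneg (hJ0 _) (hJ0 _))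
  · intro i j hi hj θ hθ
    simp only [Polynomial.eval_mul, Polynomial.eval_C, hΛ]
    have hp := Real.pi_pos
    have hiR : (i:ℝ) + 1 ≤ M := by exact_mod_cast hi
    have hjR : (j:ℝ) + 1 ≤ M := by exact_mod_cast hj
    have hu : 0 < Real.pi / M := by positivity
    have hMu : M * (Real.pi / M) = Real.pi := by field_simp
    have hθ' : θ ∈ Icc 0 Real.pi := ⟨le_trans (by positivity) hθ.1, hθ.2.trans (by nlinarith)⟩
    have hs' : nd M j ∈ Icc 0 Real.pi := ⟨by unfold nd; positivity, by
      unfold nd; nlinarith⟩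
    obtain ⟨h1, h2⟩ := sin_lower θ (nd M j) hθ' hs'
    set d := |(i:ℝ) - j| with hd
    have hd0 : 0 ≤ d := abs_nonneg _
    have hσ : (d - 1/2)/M ≤ |θ - nd M j| / Real.pi := by
      rw [div_le_div_iff₀ hMR hp, ← hMu]
      have : (d - 1/2) * (Real.pi / M) ≤ |θ - nd M j| := by
        rcases abs_cases ((i:ℝ) - j) with h | h
        · refine le_trans ?_ (le_abs_self _)
          rw [hd, h.1]
          have := hθ.1
          unfold nd; nlinarith
        · refine le_trans ?_ (neg_le_abs _)
          rw [hd, h.1]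
          have := hθ.2
          unfold nd; nlinarith
      nlinarith
    have hc := abs_nat_cases i j
    have f1 := Fe_bound N M (by omega) hNM d _ hd0 hc hσ (θ - nd M j) h1
    have f2 := Fe_bound N M (by omega) hNM d _ hd0 hc hσ (θ + nd M j) h2
    have g1 : J (θ - nd M j) ≤ (16 * M^2 / (1+d)^2)^r := pow_le_pow_left₀ (Fe_nonneg _ _) f1 r
    have g2 : J (θ + nd M j) ≤ (16 * M^2 / (1+d)^2)^r := pow_le_pow_left₀ (Fe_nonneg _ _) f2 r
    calc S⁻¹ * (J (θ - nd M j) + J (θ + nd M j)) ≤ ((N:ℝ)^(2*r))⁻¹ * (2 * (16 * M^2 / (1+d)^2)^r) := by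
          gcongr
          · exact add_nonneg (hJ0 _) (hJ0 _)
          · linarith
      _ ≤ ((N:ℝ)^(2*r))⁻¹ * (2 * (16 * (2 * (r * N))^2 / (1+d)^2)^r) := by gcongr
      _ = 2 * (64 * r^2)^r / (1 + d)^(2*r) := by
          have e : 16 * (2 * (r * (N:ℝ)))^2 / (1+d)^2 = N^2 * (64 * r^2) / (1+d)^2 := by ring
          rw [e, div_pow, mul_pow, ← pow_mul, ← pow_mul]
          field_simp

lemma sum_inv_sq (m : ℕ) : ∑ j ∈ Finset.range m, 1/(1+(j:ℝ))^2 ≤ 2 - 1/((m:ℝ)+1) + 1 := by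
  suffices h : ∑ j ∈ Finset.range m, 1/(1+(j:ℝ))^2 ≤ 2 * (1 - 1/((m:ℝ)+1)) by
    have : 0 ≤ 1/((m:ℝ)+1) := by positivity
    linarith
  induction m with
  | zero => norm_num
  | succ m ih =>
    rw [Finset.sum_range_succ]
    have h0 : (0:ℝ) ≤ m := by positivity
    have e : 1/((m:ℝ)+1) - 1/((m+1:ℕ)+1:ℝ) = 1/((1+(m:ℝ))*(m+2)) := by
      push_cast; field_simp; ring
    have h : 1/(1+(m:ℝ))^2 ≤ 2 * (1/((1+(m:ℝ))*(m+2))) := by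
      rw [mul_one_div, div_le_div_iff₀ (by positivity) (by positivity)]
      nlinarith
    linarith

lemma sum_inv_sq_abs (k m : ℕ) : ∑ j ∈ Finset.range m, 1/(1+|(j:ℝ)-k|)^2 ≤ 6 := by
  have h3 : ∀ m : ℕ, ∑ j ∈ Finset.range m, 1/(1+(j:ℝ))^2 ≤ 3 := by
    intro m
    have := sum_inv_sq m
    have : 0 ≤ 1/((m:ℝ)+1) := by positivity
    linarith
  calc ∑ j ∈ Finset.range m, 1/(1+|(j:ℝ)-k|)^2 ≤ ∑ j ∈ Finset.range ((k+1)+m), 1/(1+|(j:ℝ)-k|)^2 := by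
        apply Finset.sum_le_sum_of_subset_of_nonneg
        · intro j hj; simp only [Finset.mem_range] at *; omega
        · intros; positivity
    _ = ∑ j ∈ Finset.range (k+1), 1/(1+|(j:ℝ)-k|)^2 + ∑ j ∈ Finset.range m, 1/(1+|((k+1+j : ℕ):ℝ)-k|)^2 := by
        rw [Finset.sum_range_add]
    _ ≤ 3 + 3 := by
        refine add_le_add ?_ ?_
        · rw [← Finset.sum_range_reflect]
          refine le_trans (le_of_eq (Finset.sum_congr rfl fun j hj => ?_)) (h3 (k+1))
          have hj : j ≤ k := by simp only [Finset.mem_range] at hj; omega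
          have : k + 1 - 1 - j = k - j := by omega
          rw [this, Nat.cast_sub hj]
          rw [show (k:ℝ) - j - k = -j by ring, abs_neg, abs_of_nonneg (by positivity)]
        · refine le_trans (Finset.sum_le_sum fun j hj => ?_) (h3 m)
          push_cast
          rw [show (k:ℝ) + 1 + j - k = 1 + j by ring, abs_of_nonneg (by positivity)]
          gcongr
          linarith
    _ = 6 := by norm_num

lemma schur (p : ℝ) (hp : 1 ≤ p) (K m : ℕ) (b : ℕ → ℝ) (hb : ∀ k < K, 0 ≤ b k) :
    ∑ i ∈ Finset.range m, (∑ k ∈ Finset.range K, b k / (1+|(i:ℝ)-k|)^2) ^ p ≤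
      6 ^ p * ∑ k ∈ Finset.range K, b k ^ p := by
  have hp0 : 0 < p := by linarith
  have hb' : ∀ k ∈ Finset.range K, 0 ≤ b k := fun k hk => hb k (Finset.mem_range.1 hk)
  have h1 : ∀ i ∈ Finset.range m, (∑ k ∈ Finset.range K, b k / (1+|(i:ℝ)-k|)^2) ^ p ≤
      6 ^ (p-1) * ∑ k ∈ Finset.range K, 1 / (1+|(i:ℝ)-k|)^2 * b k ^ p := by
    intro i _
    set b' : ℕ → ℝ := fun k => max (b k) 0
    have e1 : ∑ k ∈ Finset.range K, b k / (1+|(i:ℝ)-k|)^2 = ∑ k ∈ Finset.range K, 1 / (1+|(i:ℝ)-k|)^2 * b' k := by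
      refine Finset.sum_congr rfl fun k hk => ?_
      simp only [b', max_eq_left (hb' k hk)]; ring
    have e2 : ∑ k ∈ Finset.range K, 1 / (1+|(i:ℝ)-k|)^2 * b k ^ p = ∑ k ∈ Finset.range K, 1 / (1+|(i:ℝ)-k|)^2 * b' k ^ p := by
      refine Finset.sum_congr rfl fun k hk => ?_
      simp only [b', max_eq_left (hb' k hk)]
    have hb0 : ∀ k, 0 ≤ b' k := fun k => le_max_right _ _
    rw [e1, e2]
    have h := Real.inner_le_weight_mul_Lp_of_nonneg (Finset.range K) hp
      (fun k => 1 / (1+|(i:ℝ)-k|)^2) b' (fun k => by positivity) hb0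
    have hs : ∑ k ∈ Finset.range K, 1 / (1+|(i:ℝ)-k|)^2 ≤ 6 := by
      have := sum_inv_sq_abs i K
      simpa only [abs_sub_comm] using this
    have hs0 : 0 ≤ ∑ k ∈ Finset.range K, 1 / (1+|(i:ℝ)-k|)^2 := Finset.sum_nonneg fun k _ => by positivity
    have ht0 : 0 ≤ ∑ k ∈ Finset.range K, 1 / (1+|(i:ℝ)-k|)^2 * b' k ^ p :=
      Finset.sum_nonneg fun k _ => mul_nonneg (by positivity) (Real.rpow_nonneg (hb0 k) _)
    calc (∑ k ∈ Finset.range K, 1 / (1+|(i:ℝ)-k|)^2 * b' k) ^ p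
        ≤ ((∑ k ∈ Finset.range K, 1 / (1+|(i:ℝ)-k|)^2) ^ (1 - p⁻¹) *
          (∑ k ∈ Finset.range K, 1 / (1+|(i:ℝ)-k|)^2 * b' k ^ p) ^ p⁻¹) ^ p :=
          Real.rpow_le_rpow (Finset.sum_nonneg fun k _ => mul_nonneg (by positivity) (hb0 k)) h hp0.le
      _ = (∑ k ∈ Finset.range K, 1 / (1+|(i:ℝ)-k|)^2) ^ (p-1) *
          (∑ k ∈ Finset.range K, 1 / (1+|(i:ℝ)-k|)^2 * b' k ^ p) := by
          rw [Real.mul_rpow (by positivity) (by positivity), ← Real.rpow_mul hs0, ← Real.rpow_mul ht0,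
            inv_mul_cancel₀ hp0.ne', Real.rpow_one, sub_mul, inv_mul_cancel₀ hp0.ne', one_mul]
      _ ≤ _ := by
          gcongr
  refine (Finset.sum_le_sum h1).trans ?_
  rw [← Finset.mul_sum, Finset.sum_comm]
  calc 6 ^ (p-1) * ∑ k ∈ Finset.range K, ∑ i ∈ Finset.range m, 1 / (1+|(i:ℝ)-k|)^2 * b k ^ p
      ≤ 6 ^ (p-1) * ∑ k ∈ Finset.range K, 6 * b k ^ p := by
        gcongr with k hk
        rw [← Finset.sum_mul]
        gcongr
        · exact Real.rpow_nonneg (hb' k hk) _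
        · exact sum_inv_sq_abs k m
    _ = 6 ^ (p-1) * 6 * ∑ k ∈ Finset.range K, b k ^ p := by rw [← Finset.mul_sum]; ring
    _ = _ := by
        congr 1
        rw [Real.rpow_sub_one (by norm_num)]; norm_num

lemma telescope (M : ℕ) (F : ℕ → ℝ) (hF : ∀ i j, i ≤ j → j < M → F j ≤ F i) (s i j : ℕ) (hi : i < M) (hj : j < M) :
    |F i - F j| / (1+|(i:ℝ)-j|)^(2*s) ≤
      ∑ k ∈ Finset.range (M-1), (F k - F (k+1)) / (1+|(i:ℝ)-k|)^s * (1 / (1+|(j:ℝ)-k|)^s) := by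
  wlog hij : i ≤ j generalizing i j
  · have := this j i hj hi (by omega)
    rw [abs_sub_comm, abs_sub_comm (i:ℝ)]
    refine this.trans (le_of_eq (Finset.sum_congr rfl fun k _ => ?_))
    ring
  have hδ : ∀ k, k + 1 < M → 0 ≤ F k - F (k+1) := fun k hk => by linarith [hF k (k+1) (by omega) hk]
  have hsum : F i - F j = ∑ k ∈ Finset.Ico i j, (F k - F (k+1)) := by
    clear hj
    induction j, hij using Nat.le_induction with
    | base => simp
    | succ m hm ih => rw [Finset.sum_Ico_succ_top hm, ← ih]; ring
  rw [abs_of_nonneg (by linarith [hF i j hij hj]), hsum, Finset.sum_div]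
  calc _ ≤ ∑ k ∈ Finset.Ico i j, (F k - F (k+1)) / (1+|(i:ℝ)-k|)^s * (1 / (1+|(j:ℝ)-k|)^s) := by
        refine Finset.sum_le_sum fun k hk => ?_
        obtain ⟨h1, h2⟩ := Finset.mem_Ico.1 hk
        have h1R : (i:ℝ) ≤ k := by exact_mod_cast h1
        have h2R : (k:ℝ) ≤ j := by exact_mod_cast h2.le
        have hd := hδ k (by omega)
        rw [div_mul_div_comm, mul_one, two_mul, pow_add]
        gcongr 2
        · rw [abs_of_nonpos (by linarith), abs_of_nonpos (by linarith)]; gcongr; linarith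
        · rw [abs_of_nonneg (by linarith), abs_of_nonpos (by linarith)]; gcongr; linarith
    _ ≤ _ := by
        apply Finset.sum_le_sum_of_subset_of_nonneg
        · intro k hk
          obtain ⟨h1, h2⟩ := Finset.mem_Ico.1 hk
          simp only [Finset.mem_range]; omega
        · intro k hk _
          have hk := Finset.mem_range.1 hk
          have hd := hδ k (by omega)
          positivity

lemma pointwise (M : ℕ) (F : ℕ → ℝ) (hF : ∀ i j, i ≤ j → j < M → F j ≤ F i) (s : ℕ) (hs : 2 ≤ s) (C : ℝ) (hC : 0 ≤ C)
    (l : ℕ → ℝ) (hl0 : ∀ j, 0 ≤ l j) (hl1 : ∑ j ∈ Finset.range M, l j = 1) (i : ℕ) (hi : i < M)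
    (hl : ∀ j < M, l j ≤ C / (1+|(i:ℝ)-j|)^(2*s)) :
    |F i - ∑ j ∈ Finset.range M, F j * l j| ≤
      6 * C * ∑ k ∈ Finset.range (M-1), (F k - F (k+1)) / (1+|(i:ℝ)-k|)^s := by
  have hδ : ∀ k, k + 1 < M → 0 ≤ F k - F (k+1) := fun k hk => by linarith [hF k (k+1) (by omega) hk]
  have e : F i - ∑ j ∈ Finset.range M, F j * l j = ∑ j ∈ Finset.range M, (F i - F j) * l j := by
    simp only [sub_mul]
    rw [Finset.sum_sub_distrib, ← Finset.mul_sum, hl1, mul_one]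
  rw [e]
  refine (Finset.abs_sum_le_sum_abs _ _).trans ?_
  calc ∑ j ∈ Finset.range M, |(F i - F j) * l j|
      ≤ ∑ j ∈ Finset.range M, C * ∑ k ∈ Finset.range (M-1), (F k - F (k+1)) / (1+|(i:ℝ)-k|)^s * (1 / (1+|(j:ℝ)-k|)^s) := by
        refine Finset.sum_le_sum fun j hj => ?_
        have hj := Finset.mem_range.1 hj
        rw [abs_mul, abs_of_nonneg (hl0 j)]
        calc |F i - F j| * l j ≤ |F i - F j| * (C / (1+|(i:ℝ)-j|)^(2*s)) := by gcongr; exact hl j hj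
          _ = C * (|F i - F j| / (1+|(i:ℝ)-j|)^(2*s)) := by ring
          _ ≤ _ := by gcongr; exact telescope M F hF s i j hi hj
    _ = C * ∑ k ∈ Finset.range (M-1), (F k - F (k+1)) / (1+|(i:ℝ)-k|)^s * ∑ j ∈ Finset.range M, (1 / (1+|(j:ℝ)-k|)^s) := by
        rw [← Finset.mul_sum, Finset.sum_comm]
        congr 1
        refine Finset.sum_congr rfl fun k _ => ?_
        rw [Finset.mul_sum]
    _ ≤ C * ∑ k ∈ Finset.range (M-1), (F k - F (k+1)) / (1+|(i:ℝ)-k|)^s * 6 := by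
        gcongr with k hk
        · have hk := Finset.mem_range.1 hk
          have := hδ k (by omega)
          positivity
        · refine le_trans (Finset.sum_le_sum fun j _ => ?_) (sum_inv_sq_abs k M)
          gcongr
          linarith [abs_nonneg ((j:ℝ)-k)]
    _ = _ := by rw [← Finset.sum_mul]; ring

/-- model weight -/
def Wt (M : ℕ) (a b : ℝ) (i : ℕ) : ℝ := ((i:ℝ)+1)^a * ((M:ℝ)-i)^b

lemma Wt_nonneg (M : ℕ) (a b : ℝ) (i : ℕ) (hi : i < M) : 0 ≤ Wt M a b i := by
  have : (i:ℝ) + 1 ≤ M := by exact_mod_cast hi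
  exact mul_nonneg (by positivity) (Real.rpow_nonneg (by linarith) _)

lemma Wt_doubling (M : ℕ) (a b : ℝ) (ha : 0 ≤ a) (hb : 0 ≤ b) (i k : ℕ) (hi : i < M) (hk : k < M) :
    Wt M a b i ≤ (1+|(i:ℝ)-k|)^(a+b) * Wt M a b k := by
  have hi : (i:ℝ) + 1 ≤ M := by exact_mod_cast hi
  have hk : (k:ℝ) + 1 ≤ M := by exact_mod_cast hk
  have h0 : (0:ℝ) ≤ i := by positivity
  have h1 : (0:ℝ) ≤ k := by positivity
  set d := |(i:ℝ)-k| with hd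
  have hd0 : 0 ≤ d := abs_nonneg _
  have hd1 : (i:ℝ) - k ≤ d := le_abs_self _
  have hd2 : (k:ℝ) - i ≤ d := by have := neg_le_abs ((i:ℝ)-k); linarith
  unfold Wt
  rw [Real.rpow_add (by positivity)]
  have e1 : ((i:ℝ)+1)^a ≤ (1+d)^a * ((k:ℝ)+1)^a := by
    rw [← Real.mul_rpow (by positivity) (by positivity)]
    gcongr; nlinarith
  have e2 : ((M:ℝ)-i)^b ≤ (1+d)^b * ((M:ℝ)-k)^b := by
    rw [← Real.mul_rpow (by positivity) (by linarith)]
    apply Real.rpow_le_rpow (by linarith) _ hb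
    nlinarith
  calc _ ≤ ((1+d)^a * ((k:ℝ)+1)^a) * ((1+d)^b * ((M:ℝ)-k)^b) := by
        apply mul_le_mul e1 e2 (Real.rpow_nonneg (by linarith) _) (by positivity)
    _ = _ := by ring

lemma weighted_schur (p : ℝ) (hp : 1 ≤ p) (M : ℕ) (a b : ℝ) (ha : 0 ≤ a) (hb : 0 ≤ b) (s : ℕ) (hs : a + b + 2 ≤ s)
    (δ : ℕ → ℝ) (hδ : ∀ k < M - 1, 0 ≤ δ k) :
    ∑ i ∈ Finset.range M, Wt M a b i * (∑ k ∈ Finset.range (M-1), δ k / (1+|(i:ℝ)-k|)^s) ^ p ≤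
      6 ^ p * ∑ k ∈ Finset.range (M-1), Wt M a b k * δ k ^ p := by
  have hp0 : 0 < p := by linarith
  have hW : ∀ k < M, (Wt M a b k ^ (1/p))^p = Wt M a b k := fun k hk => by
    rw [← Real.rpow_mul (Wt_nonneg M a b k hk), one_div_mul_cancel hp0.ne', Real.rpow_one]
  have h := schur p hp (M-1) M (fun k => Wt M a b k ^ (1/p) * δ k) (fun k hk =>
    mul_nonneg (Real.rpow_nonneg (Wt_nonneg M a b k (by omega)) _) (hδ k hk))
  refine le_trans (Finset.sum_le_sum fun i hi => ?_) (h.trans (le_of_eq ?_))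
  · have hi := Finset.mem_range.1 hi
    have hnn : 0 ≤ ∑ k ∈ Finset.range (M-1), δ k / (1+|(i:ℝ)-k|)^s := Finset.sum_nonneg fun k hk => by
      have := hδ k (Finset.mem_range.1 hk); positivity
    have hVnn : 0 ≤ Wt M a b i ^ (1/p) := Real.rpow_nonneg (Wt_nonneg M a b i hi) _
    rw [← hW i hi, ← Real.mul_rpow hVnn hnn]
    refine Real.rpow_le_rpow (mul_nonneg hVnn hnn) ?_ hp0.le
    rw [Finset.mul_sum]
    refine Finset.sum_le_sum fun k hk => ?_
    have hk := Finset.mem_range.1 hk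
    have hd := hδ k hk
    have hWk := Wt_nonneg M a b k (by omega)
    set d := |(i:ℝ)-k| with hd'
    have hd0 : 0 ≤ d := abs_nonneg _
    have h1 : Wt M a b i ^ (1/p) ≤ (1+d)^(s-2) * Wt M a b k ^ (1/p) := by
      refine (Real.rpow_le_rpow (Wt_nonneg M a b i hi) (Wt_doubling M a b ha hb i k hi (by omega)) (by positivity)).trans ?_
      rw [Real.mul_rpow (by positivity) hWk, ← Real.rpow_mul (by positivity)]
      gcongr
      have hs2 : 2 ≤ s := by
        have : (2:ℝ) ≤ s := by linarith
        exact_mod_cast this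
      rw [← Real.rpow_natCast, Nat.cast_sub hs2]
      apply Real.rpow_le_rpow_of_exponent_le (by linarith)
      have : (a+b)*(1/p) ≤ (a+b) * 1 := by
        gcongr
        rw [div_le_one hp0]; exact hp
      push_cast; linarith
    have hs2 : 2 ≤ s := by
        have : (2:ℝ) ≤ s := by linarith
        exact_mod_cast this
    have es : (1+d)^s = (1+d)^(s-2) * (1+d)^2 := by rw [← pow_add]; congr 1; omega
    rw [es]
    calc Wt M a b i ^ (1/p) * (δ k / ((1+d)^(s-2) * (1+d)^2)) ≤
        ((1+d)^(s-2) * Wt M a b k ^ (1/p)) * (δ k / ((1+d)^(s-2) * (1+d)^2)) := by gcongr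
      _ = _ := by field_simp
  · congr 1
    refine Finset.sum_congr rfl fun k hk => ?_
    have hk := Finset.mem_range.1 hk
    rw [Real.mul_rpow (Real.rpow_nonneg (Wt_nonneg M a b k (by omega)) _) (hδ k hk), hW k (by omega)]

/-- signed power -/
def spow (p x : ℝ) : ℝ := if 0 ≤ x then x ^ p else -((-x)^p)

lemma abs_spow (p x : ℝ) : |spow p x| = |x|^p := by
  unfold spow
  split_ifs with h
  · rw [abs_of_nonneg (Real.rpow_nonneg h _), abs_of_nonneg h]
  · rw [abs_neg, abs_of_nonneg (Real.rpow_nonneg (by linarith) _), abs_of_neg (by linarith)]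

lemma sub_rpow_le (p : ℝ) (hp : 1 ≤ p) (x y : ℝ) (hy : 0 ≤ y) (h : y ≤ x) : (x - y)^p ≤ x^p - y^p := by
  have := Real.add_rpow_le_rpow_add (a := x - y) (b := y) (by linarith) hy hp
  rw [sub_add_cancel] at this; linarith

lemma add_rpow_le_two (p : ℝ) (hp : 0 ≤ p) (x y : ℝ) (hx : 0 ≤ x) (hy : 0 ≤ y) : (x + y)^p ≤ 2^p * (x^p + y^p) := by
  wlog h : y ≤ x generalizing x y
  · have := this y x hy hx (by linarith)
    rw [add_comm x, add_comm (x^p)]; exact this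
  calc (x+y)^p ≤ (2*x)^p := by gcongr; linarith
    _ = 2^p * x^p := by rw [Real.mul_rpow (by norm_num) hx]
    _ ≤ _ := by gcongr; linarith [Real.rpow_nonneg hy p]

lemma sub_rpow_le_spow (p : ℝ) (hp : 1 ≤ p) (x y : ℝ) (h : y ≤ x) : (x - y)^p ≤ 2^p * (spow p x - spow p y) := by
  have h2 : (1:ℝ) ≤ 2^p := Real.one_le_rpow (by norm_num) (by linarith)
  have hnn : 0 ≤ (x-y)^p := Real.rpow_nonneg (by linarith) _
  unfold spow
  split_ifs with h1 h3 h3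
  · have := sub_rpow_le p hp x y h3 h
    nlinarith
  · have := add_rpow_le_two p (by linarith) x (-y) h1 (by linarith)
    simpa [sub_eq_add_neg] using this
  · linarith
  · have := sub_rpow_le p hp (-y) (-x) (by linarith) (by linarith)
    rw [show -y - -x = x - y by ring] at this
    nlinarith

lemma bern_step (b y : ℝ) (hb : 1 ≤ b) (hy : 0 ≤ y) : (y+1)^b - y^b ≤ b * ((y+1)^b / (y+1)) := by
  have h := one_add_mul_self_le_rpow_one_add (s := -1/(y+1)) (by
    rw [le_div_iff₀ (by linarith)]; linarith) hb
  have e : 1 + -1/(y+1) = y/(y+1) := by field_simp; ring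
  rw [e, Real.div_rpow hy (by linarith), le_div_iff₀ (by positivity)] at h
  have e2 : (1 + b * (-1/(y+1))) * (y+1)^b = (y+1)^b - b * ((y+1)^b / (y+1)) := by ring
  rw [e2] at h
  linarith

/-- auxiliary harmonic weight -/
def hh (M k : ℕ) : ℝ := 1/((k:ℝ)+1) + 1/((M:ℝ)-k)

lemma Wt_step (M : ℕ) (a b : ℝ) (ha : 1 ≤ a) (hb : 1 ≤ b) (k : ℕ) (hk : k < M) :
    |Wt M a b k - (k:ℝ)^a * ((M:ℝ)-k+1)^b| ≤ (a + b * 2^b) * (Wt M a b k * hh M k) := by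
  have hk : (k:ℝ) + 1 ≤ M := by exact_mod_cast hk
  have h0 : (0:ℝ) ≤ k := by positivity
  unfold Wt hh
  obtain ⟨y, hy⟩ : ∃ y : ℝ, y = (M:ℝ) - k := ⟨_, rfl⟩
  rw [← hy]
  have hy1 : 1 ≤ y := by linarith
  set X := ((k:ℝ)+1)^a
  set X' := (k:ℝ)^a
  set Y := y^b
  set Y' := (y+1)^b
  have hX : X - X' ≤ a * (X / (k+1)) := bern_step a k ha h0
  have hY : Y' - Y ≤ b * (Y' / (y+1)) := bern_step b y hb (by linarith)
  have hX' : X' ≤ X := Real.rpow_le_rpow h0 (by linarith) (by linarith)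
  have hYY : Y ≤ Y' := Real.rpow_le_rpow (by linarith) (by linarith) (by linarith)
  have hX0 : 0 ≤ X' := by positivity
  have hY0 : 0 ≤ Y := by positivity
  have hY2 : Y' ≤ 2^b * Y := by
    simp only [Y, Y']
    rw [← Real.mul_rpow (by norm_num) (by linarith)]
    apply Real.rpow_le_rpow <;> linarith
  have hY3 : Y' - Y ≤ b * 2^b * (Y / y) := by
    refine hY.trans ?_
    calc b * (Y'/(y+1)) ≤ b * ((2^b*Y)/y) := by
          gcongr
          linarith
      _ = b*2^b*(Y/y) := by ring
  have e : X * Y - X' * Y' = (X - X') * Y - X' * (Y' - Y) := by ring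
  have t1 : 0 ≤ (X - X') * Y := mul_nonneg (by linarith) hY0
  have t2 : 0 ≤ X' * (Y' - Y) := mul_nonneg hX0 (by linarith)
  have t3 : (X - X') * Y ≤ a * (X / (k+1)) * Y := by gcongr
  have t4 : X' * (Y' - Y) ≤ X * (b * 2^b * (Y / y)) := by
    apply mul_le_mul hX' hY3 (by linarith) (by linarith)
  have e2 : (a + b * 2^b) * (X * Y * (1/((k:ℝ)+1) + 1/y)) =
      a * (X / (k+1)) * Y + X * (b * 2^b * (Y / y)) + (b * 2^b * (X*Y/(k+1)) + a * (X * Y / y)) := by ring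
  have t5 : 0 ≤ b * 2^b * (X*Y/(k+1)) + a * (X * Y / y) := by
    have : 0 ≤ X := by linarith
    positivity
  rw [e, e2, abs_le]
  constructor <;> linarith

lemma abel (V ψ : ℕ → ℝ) (hV : V 0 = 0) (m : ℕ) :
    ∑ k ∈ Finset.range m, V (k+1) * (ψ k - ψ (k+1)) = ∑ k ∈ Finset.range m, (V (k+1) - V k) * ψ k - V m * ψ m := by
  induction m with
  | zero => simp [hV]
  | succ m ih => rw [Finset.sum_range_succ, Finset.sum_range_succ, ih]; ring

lemma sum_by_parts (p : ℝ) (hp : 1 ≤ p) (a b : ℝ) (ha : 1 ≤ a) (hb : 1 ≤ b) : ∃ C : ℝ, 0 < C ∧ ∀ (M : ℕ) (_ : 1 ≤ M)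
    (F : ℕ → ℝ) (_ : ∀ i j, i ≤ j → j < M → F j ≤ F i),
    ∑ k ∈ Finset.range (M-1), Wt M a b k * (F k - F (k+1))^p ≤
      C * ∑ k ∈ Finset.range M, |F k|^p * (Wt M a b k * hh M k) := by
  refine ⟨2^p * (1 + (a + b * 2^b)), by positivity, fun M hM F hF => ?_⟩
  set C1 := a + b * 2^b with hC1
  have hC1p : 0 ≤ C1 := by positivity
  set V : ℕ → ℝ := fun k => (k:ℝ)^a * ((M:ℝ)-k+1)^b with hV
  have hVW : ∀ k, V (k+1) = Wt M a b k := by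
    intro k
    simp only [hV, Wt]; push_cast
    congr 2; ring
  have hV0 : V 0 = 0 := by simp [hV, Real.zero_rpow (by linarith : a ≠ 0)]
  have hstep : ∀ k < M, |V (k+1) - V k| ≤ C1 * (Wt M a b k * hh M k) := fun k hk => by
    rw [hVW]; exact Wt_step M a b ha hb k hk
  have hh0 : ∀ k < M, 0 ≤ hh M k := fun k hk => by
    have hk : (k:ℝ) + 1 ≤ M := by exact_mod_cast hk
    have : 0 < (M:ℝ) - k := by linarith
    unfold hh; positivity
  have h1 : ∑ k ∈ Finset.range (M-1), Wt M a b k * (F k - F (k+1))^p ≤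
      2^p * ∑ k ∈ Finset.range (M-1), V (k+1) * (spow p (F k) - spow p (F (k+1))) := by
    rw [Finset.mul_sum]
    refine Finset.sum_le_sum fun k hk => ?_
    have hk := Finset.mem_range.1 hk
    rw [hVW]
    have := sub_rpow_le_spow p hp (F k) (F (k+1)) (hF k (k+1) (by omega) (by omega))
    have hw := Wt_nonneg M a b k (by omega)
    calc _ ≤ Wt M a b k * (2^p * (spow p (F k) - spow p (F (k+1)))) := by gcongr
      _ = _ := by ring
  refine h1.trans ?_
  rw [mul_assoc]
  gcongr
  rw [abel V (fun k => spow p (F k)) hV0]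
  obtain ⟨m, rfl⟩ : ∃ m, M = m + 1 := ⟨M - 1, by omega⟩
  simp only [Nat.add_sub_cancel]
  rw [Finset.sum_range_succ]
  have t1 : ∑ k ∈ Finset.range m, (V (k+1) - V k) * spow p (F k) ≤
      ∑ k ∈ Finset.range m, C1 * (|F k|^p * (Wt (m+1) a b k * hh (m+1) k)) := by
    refine Finset.sum_le_sum fun k hk => ?_
    have hk := Finset.mem_range.1 hk
    refine (le_abs_self _).trans ?_
    rw [abs_mul, abs_spow]
    have := hstep k (by omega)
    calc _ ≤ C1 * (Wt (m+1) a b k * hh (m+1) k) * |F k|^p := by gcongr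
      _ = _ := by ring
  have hnn : ∀ k < m + 1, 0 ≤ |F k|^p * (Wt (m+1) a b k * hh (m+1) k) := fun k hk =>
    mul_nonneg (by positivity) (mul_nonneg (Wt_nonneg _ _ _ _ hk) (hh0 k hk))
  have t2 : - (V m * spow p (F m)) ≤ (1 + C1) * (|F m|^p * (Wt (m+1) a b m * hh (m+1) m)) := by
    refine (neg_le_abs _).trans ?_
    rw [abs_mul, abs_spow]
    have h3 := hstep m (by omega)
    have h4 : |V m| ≤ |V (m+1)| + |V (m+1) - V m| := by
      have := abs_sub_abs_le_abs_sub (V m) (V (m+1))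
      rw [abs_sub_comm] at this; linarith
    have hw := Wt_nonneg (m+1) a b m (by omega)
    have h5 : |V (m+1)| ≤ Wt (m+1) a b m * hh (m+1) m := by
      rw [hVW, abs_of_nonneg hw]
      have : 1 ≤ hh (m+1) m := by
        unfold hh; push_cast
        have : 0 ≤ 1/((m:ℝ)+1) := by positivity
        rw [show (m:ℝ) + 1 - m = 1 by ring]; linarith
      nlinarith
    calc _ ≤ (1 + C1) * (Wt (m+1) a b m * hh (m+1) m) * |F m|^p := by gcongr; linarith
      _ = _ := by ring
  rw [← Finset.mul_sum] at t1
  have t3 : 0 ≤ ∑ k ∈ Finset.range m, (|F k|^p * (Wt (m+1) a b k * hh (m+1) k)) :=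
    Finset.sum_nonneg fun k hk => hnn k (by have := Finset.mem_range.1 hk; omega)
  nlinarith

def om (α β : ℝ) (M k : ℕ) : ℝ := (((k:ℝ)+1)/M)^(2*β) * (((M:ℝ)-k)/M)^(2*α)
def el (M k : ℕ) : ℝ := ((k:ℝ)+1)*((M:ℝ)-k)/(M:ℝ)^3
def cc (M : ℕ) (t : ℝ) : ℝ := Real.cos (t*(Real.pi/M))

lemma cc_symm (M : ℕ) (hM : 1 ≤ M) (t : ℝ) : cc M ((M:ℝ)-t) = - cc M t := by
  unfold cc
  have : (M:ℝ) ≠ 0 := by positivity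
  rw [← Real.cos_pi_sub]
  congr 1
  field_simp

lemma cc_mem (M : ℕ) (hM : 1 ≤ M) (t : ℝ) (h0 : 0 ≤ t) (h1 : t ≤ M) :
    0 ≤ t*(Real.pi/M) ∧ t*(Real.pi/M) ≤ Real.pi := by
  have hpi := Real.pi_pos
  have : (0:ℝ) < M := by positivity
  refine ⟨by positivity, ?_⟩
  calc t*(Real.pi/M) ≤ M*(Real.pi/M) := by gcongr
    _ = Real.pi := by field_simp

lemma cc_anti (M : ℕ) (hM : 1 ≤ M) (t1 t2 : ℝ) (h0 : 0 ≤ t1) (h1 : t1 ≤ t2) (h2 : t2 ≤ M) :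
    cc M t2 ≤ cc M t1 := by
  apply Real.cos_le_cos_of_nonneg_of_le_pi (cc_mem M hM t1 h0 (h1.trans h2)).1
    (cc_mem M hM t2 (h0.trans h1) h2).2
  have := Real.pi_pos
  gcongr

lemma cc_anti_strict (M : ℕ) (hM : 1 ≤ M) (t1 t2 : ℝ) (h0 : 0 ≤ t1) (h1 : t1 < t2) (h2 : t2 ≤ M) :
    cc M t2 < cc M t1 := by
  apply Real.cos_lt_cos_of_nonneg_of_le_pi (cc_mem M hM t1 h0 (h1.le.trans h2)).1
    (cc_mem M hM t2 (h0.trans h1.le) h2).2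
  have := Real.pi_pos
  have : (0:ℝ) < M := by positivity
  gcongr

lemma cc_zero (M : ℕ) : cc M 0 = 1 := by simp [cc]
lemma cc_top (M : ℕ) (hM : 1 ≤ M) : cc M M = -1 := by
  have := cc_symm M hM 0
  simpa [cc_zero] using this

lemma cc_Ioo (M : ℕ) (hM : 1 ≤ M) (t : ℝ) (h0 : 0 < t) (h1 : t < M) : cc M t ∈ Ioo (-1:ℝ) 1 := by
  constructor
  · rw [← cc_top M hM]; exact cc_anti_strict M hM _ _ h0.le h1 le_rfl
  · rw [← cc_zero M]; exact cc_anti_strict M hM _ _ le_rfl h0 h1.le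

lemma cc_param (M : ℕ) (hM : 1 ≤ M) (t1 t2 : ℝ) (h0 : 0 ≤ t1) (h1 : t1 ≤ t2) (h2 : t2 ≤ M) (x : ℝ)
    (hx : x ∈ Icc (cc M t2) (cc M t1)) : ∃ t ∈ Icc t1 t2, x = cc M t := by
  have hM' : (0:ℝ) < M := by positivity
  have hpi := Real.pi_pos
  have hc : ContinuousOn (cc M) (Icc t1 t2) := by unfold cc; fun_prop
  obtain ⟨t, ht, e⟩ := intermediate_value_Icc' h1 hc hx
  exact ⟨t, ht, e.symm⟩

lemma one_sub_cc_le (M : ℕ) (hM : 1 ≤ M) (t s : ℝ) (h0 : 0 ≤ t) (hts : t ≤ s) :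
    1 - cc M t ≤ 5 * (s/M)^2 := by
  have hM' : (0:ℝ) < M := by positivity
  have h := Real.one_sub_sq_div_two_le_cos (x := t*(Real.pi/M))
  have e : (t*(Real.pi/M))^2/2 = (Real.pi^2/2)*(t/M)^2 := by ring
  have hpi : Real.pi^2/2 ≤ 5 := by nlinarith [Real.pi_lt_d2, Real.pi_pos]
  have : (Real.pi^2/2)*(t/M)^2 ≤ 5*(s/M)^2 := by gcongr
  unfold cc
  linarith

lemma one_sub_cc_ge (M : ℕ) (hM : 1 ≤ M) (t s : ℝ) (h0 : 0 ≤ s) (hts : s/4 ≤ t) (h1 : t ≤ M) :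
    (1/8) * (s/M)^2 ≤ 1 - cc M t := by
  have hM' : (0:ℝ) < M := by positivity
  obtain ⟨ha, hb⟩ := cc_mem M hM t (by linarith) h1
  have h := Real.cos_le_one_sub_mul_cos_sq (x := t*(Real.pi/M)) (by rwa [abs_of_nonneg ha])
  have hpi := Real.pi_pos
  have e : 2/Real.pi^2*(t*(Real.pi/M))^2 = 2*(t/M)^2 := by field_simp
  have : (1/8) * (s/M)^2 ≤ 2*(t/M)^2 := by
    calc (1/8) * (s/M)^2 = 2*((s/4)/M)^2 := by ring
      _ ≤ _ := by gcongr
  unfold cc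
  linarith

lemma jac_prod (X Y c α β : ℝ) (hc : 0 ≤ c) (hX : 0 ≤ X) (hY : 0 ≤ Y) :
    (c*Y^2)^α * (c*X^2)^β = c^α*c^β*(X^(2*β)*Y^(2*α)) := by
  rw [Real.mul_rpow hc (by positivity), Real.mul_rpow hc (by positivity), ← Real.rpow_natCast_mul hX,
    ← Real.rpow_natCast_mul hY]
  push_cast
  ring

lemma geo_upper (α β : ℝ) (hα : 0 ≤ α) (hβ : 0 ≤ β) (M i : ℕ) (hi : i < M) (x : ℝ)
    (hx : x ∈ Icc (cc M ((i:ℝ)+1)) (cc M i)) : 0 ≤ jacobi α β x ∧ jacobi α β x ≤ 5^α*5^β*om α β M i := by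
  have hM : 1 ≤ M := by omega
  have hiM : (i:ℝ)+1 ≤ M := by exact_mod_cast hi
  have hM' : (0:ℝ) < M := by positivity
  obtain ⟨t, ht, rfl⟩ := cc_param M hM i (i+1) (by positivity) (by linarith) hiM x hx
  have hi0 : (0:ℝ) ≤ i := by positivity
  have a1 := one_sub_cc_le M hM t (i+1) (by linarith [ht.1]) ht.2
  have a2 := one_sub_cc_le M hM (M-t) (M-i) (by linarith [ht.2]) (by linarith [ht.1])
  rw [cc_symm M hM] at a2
  have b1 : 0 ≤ 1 - cc M t := by linarith [Real.cos_le_one (t*(Real.pi/M)), show cc M t = Real.cos (t*(Real.pi/M)) from rfl]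
  have b2 : 0 ≤ 1 + cc M t := by linarith [Real.neg_one_le_cos (t*(Real.pi/M)), show cc M t = Real.cos (t*(Real.pi/M)) from rfl]
  unfold jacobi om
  refine ⟨by positivity, ?_⟩
  rw [← jac_prod _ _ _ _ _ (by norm_num) (by positivity) (div_nonneg (by linarith) hM'.le)]
  apply mul_le_mul (Real.rpow_le_rpow b2 (by linarith) hα) (Real.rpow_le_rpow b1 a1 hβ) (by positivity) (by positivity)

lemma geo_lower (α β : ℝ) (hα : 0 ≤ α) (hβ : 0 ≤ β) (M i : ℕ) (hi : i < M) (x : ℝ)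
    (hx : x ∈ Icc (cc M ((i:ℝ)+3/4)) (cc M (i+1/4))) :
    (1/8)^α*(1/8)^β*om α β M i ≤ jacobi α β x := by
  have hM : 1 ≤ M := by omega
  have hiM : (i:ℝ)+1 ≤ M := by exact_mod_cast hi
  have hM' : (0:ℝ) < M := by positivity
  obtain ⟨t, ht, rfl⟩ := cc_param M hM (i+1/4) (i+3/4) (by positivity) (by linarith) (by linarith) x hx
  have hi0 : (0:ℝ) ≤ i := by positivity
  have a1 := one_sub_cc_ge M hM t (i+1) (by linarith) (by linarith [ht.1]) (by linarith [ht.2])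
  have a2 := one_sub_cc_ge M hM (M-t) (M-i) (by linarith) (by linarith [ht.2]) (by linarith [ht.1])
  rw [cc_symm M hM] at a2
  unfold jacobi om
  rw [← jac_prod _ _ _ _ _ (by norm_num) (by positivity) (div_nonneg (by linarith) hM'.le)]
  have : 0 ≤ ((M:ℝ)-i)/M := div_nonneg (by linarith) hM'.le
  apply mul_le_mul (Real.rpow_le_rpow (by positivity) (by linarith) hα) (Real.rpow_le_rpow (by positivity) a1 hβ) (by positivity)
  exact Real.rpow_nonneg (by nlinarith [sq_nonneg (((M:ℝ)-i)/M)]) _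

lemma sin_prod_bounds (m : ℝ) (h0 : 0 ≤ m) (h1 : m ≤ Real.pi) :
    2/Real.pi^2*(m*(Real.pi-m)) ≤ Real.sin m ∧ Real.sin m ≤ 2/Real.pi*(m*(Real.pi-m)) := by
  wlog h : m ≤ Real.pi/2 generalizing m
  · have := this (Real.pi-m) (by linarith) (by linarith) (by linarith)
    rw [Real.sin_pi_sub] at this
    have e : (Real.pi - m) * (Real.pi - (Real.pi - m)) = m*(Real.pi-m) := by ring
    rwa [e] at this
  have hpi := Real.pi_pos
  constructor
  · refine le_trans ?_ (Real.mul_le_sin h0 h)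
    calc 2/Real.pi^2*(m*(Real.pi-m)) ≤ 2/Real.pi^2*(m*(Real.pi)) := by gcongr; linarith
      _ = _ := by field_simp
  · refine (Real.sin_le h0).trans ?_
    calc m = 2/Real.pi*(m*(Real.pi-Real.pi/2)) := by field_simp; ring
      _ ≤ _ := by gcongr

lemma cc_sub (M : ℕ) (t1 t2 : ℝ) : cc M t1 - cc M t2 =
    2 * Real.sin ((t1+t2)/2*(Real.pi/M)) * Real.sin ((t2-t1)/2*(Real.pi/M)) := by
  unfold cc
  rw [Real.cos_sub_cos]
  have e1 : (t1 * (Real.pi / M) + t2 * (Real.pi / M)) / 2 = (t1+t2)/2*(Real.pi/M) := by ring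
  have e2 : (t1 * (Real.pi / M) - t2 * (Real.pi / M)) / 2 = -((t2-t1)/2*(Real.pi/M)) := by ring
  rw [e1, e2, Real.sin_neg]; ring

lemma len_upper (M i : ℕ) (hi : i < M) : cc M i - cc M ((i:ℝ)+1) ≤ 20 * el M i := by
  have hM : 1 ≤ M := by omega
  have hiM : (i:ℝ)+1 ≤ M := by exact_mod_cast hi
  have hM' : (0:ℝ) < M := by positivity
  have hi0 : (0:ℝ) ≤ i := by positivity
  have hpi := Real.pi_pos
  rw [cc_sub]
  set u := Real.pi/M with hu
  have hu0 : 0 < u := by positivity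
  have hMu : M*u = Real.pi := by rw [hu]; field_simp
  have hm := cc_mem M hM (((i:ℝ)+(i+1))/2) (by positivity) (by linarith)
  rw [← hu] at hm
  have h1 := (sin_prod_bounds _ hm.1 hm.2).2
  have h2 : Real.sin (((i:ℝ)+1-i)/2*u) ≤ u/2 := by
    have : ((i:ℝ)+1-i)/2*u = u/2 := by ring
    rw [this]; exact Real.sin_le (by positivity)
  have h3 : ((i:ℝ)+(i+1))/2*u*(Real.pi - ((i:ℝ)+(i+1))/2*u) ≤ ((i+1)*u)*((M-i)*u) := by
    apply mul_le_mul
    · gcongr; linarith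
    · rw [← hMu, ← sub_mul]; gcongr; linarith
    · linarith [hm.2]
    · positivity
  have hs0 := Real.sin_nonneg_of_nonneg_of_le_pi hm.1 hm.2
  have hMi : 0 < (M:ℝ)-i := by linarith
  calc 2 * Real.sin (((i:ℝ)+(i+1))/2*u) * Real.sin (((i:ℝ)+1-i)/2*u)
      ≤ 2 * (2/Real.pi*(((i+1)*u)*((M-i)*u))) * (u/2) := by
        have hs1 : 0 ≤ Real.sin (((i:ℝ)+1-i)/2*u) := by
          have : ((i:ℝ)+1-i)/2*u = u/2 := by ring
          rw [this]
          have hup : u ≤ Real.pi := by rw [hu]; exact div_le_self hpi.le (by exact_mod_cast hM)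
          exact Real.sin_nonneg_of_nonneg_of_le_pi (by positivity) (by linarith)
        gcongr
        exact h1.trans (by gcongr)
    _ = (2*Real.pi^2) * el M i := by
        unfold el; rw [hu]; field_simp
    _ ≤ 20 * el M i := by
        have : 0 ≤ el M i := by unfold el; positivity
        gcongr
        nlinarith [Real.pi_lt_d2, Real.pi_pos]

lemma len_lower (M i : ℕ) (hi : i < M) (t : ℝ) (ht : (i:ℝ)+1/4 ≤ t) (ht2 : t ≤ i+1/2) :
    el M i / 16 ≤ cc M t - cc M (t+1/4) := by
  have hM : 1 ≤ M := by omega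
  have hiM : (i:ℝ)+1 ≤ M := by exact_mod_cast hi
  have hM' : (0:ℝ) < M := by positivity
  have hi0 : (0:ℝ) ≤ i := by positivity
  have hpi := Real.pi_pos
  rw [cc_sub]
  set u := Real.pi/M with hu
  have hu0 : 0 < u := by positivity
  have hMu : M*u = Real.pi := by rw [hu]; field_simp
  have hm := cc_mem M hM ((t+(t+1/4))/2) (by linarith) (by linarith)
  rw [← hu] at hm
  have h1 := (sin_prod_bounds _ hm.1 hm.2).1
  have h2 : u/(4*Real.pi) ≤ Real.sin ((t+1/4-t)/2*u) := by
    have : (t+1/4-t)/2*u = u/8 := by ring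
    rw [this]
    have hup : u ≤ Real.pi := by rw [hu]; exact div_le_self hpi.le (by exact_mod_cast hM)
    refine le_trans (le_of_eq ?_) (Real.mul_le_sin (by positivity) (by linarith))
    field_simp; norm_num
  have hMi : 0 < (M:ℝ)-i := by linarith
  have h3 : ((i+1)/4*u)*((M-i)/4*u) ≤ (t+(t+1/4))/2*u*(Real.pi - (t+(t+1/4))/2*u) := by
    apply mul_le_mul
    · apply mul_le_mul_of_nonneg_right _ hu0.le; linarith
    · rw [← hMu, ← sub_mul]; apply mul_le_mul_of_nonneg_right _ hu0.le; linarith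
    · positivity
    · linarith [hm.1]
  calc el M i / 16 = 2 * (2/Real.pi^2*(((i+1)/4*u)*((M-i)/4*u))) * (u/(4*Real.pi)) := by
        unfold el; rw [hu]; field_simp; norm_num
    _ ≤ _ := by
        gcongr
        · exact mul_nonneg (by norm_num) (Real.sin_nonneg_of_nonneg_of_le_pi hm.1 hm.2)
        · exact le_trans (by gcongr) h1

lemma om_nonneg (α β : ℝ) (M k : ℕ) (hk : k < M) : 0 ≤ om α β M k := by
  have : (k:ℝ)+1 ≤ M := by exact_mod_cast hk
  have : 0 < (M:ℝ) - k := by linarith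
  unfold om; positivity

lemma el_nonneg (M k : ℕ) (hk : k < M) : 0 ≤ el M k := by
  have : (k:ℝ)+1 ≤ M := by exact_mod_cast hk
  have : 0 < (M:ℝ) - k := by linarith
  unfold el; positivity

lemma hh_nonneg (M k : ℕ) (hk : k < M) : 0 ≤ hh M k := by
  have : (k:ℝ)+1 ≤ M := by exact_mod_cast hk
  have : 0 < (M:ℝ) - k := by linarith
  unfold hh; positivity

lemma om_el (p α β : ℝ) (M k : ℕ) (hk : k < M) :
    om α β M k ^ p * el M k = Wt M (2*β*p+1) (2*α*p+1) k * ((M:ℝ)^(2*β*p+2*α*p+3))⁻¹ := by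
  have h1 : (k:ℝ)+1 ≤ M := by exact_mod_cast hk
  have h2 : 0 < (M:ℝ) - k := by linarith
  have hM : 0 < (M:ℝ) := by linarith [show (0:ℝ) ≤ k by positivity]
  unfold om el Wt
  rw [Real.mul_rpow (by positivity) (by positivity), ← Real.rpow_mul (by positivity), ← Real.rpow_mul (by positivity),
    Real.div_rpow (by positivity) hM.le, Real.div_rpow h2.le hM.le, Real.rpow_add_one (by positivity),
    Real.rpow_add_one h2.ne', Real.rpow_add hM, Real.rpow_add hM]
  have : (M:ℝ)^(3:ℝ) = (M:ℝ)^3 := by norm_cast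
  rw [this]
  field_simp

lemma el_hh (M k : ℕ) (hk : k < M) : el M k * hh M k = ((M:ℝ)+1)/(M:ℝ)^3 := by
  have h1 : (k:ℝ)+1 ≤ M := by exact_mod_cast hk
  have h2 : 0 < (M:ℝ) - k := by linarith
  have hM : 0 < (M:ℝ) := by linarith [show (0:ℝ) ≤ k by positivity]
  unfold el hh
  field_simp
  ring

lemma hh_sum (M : ℕ) : ∑ k ∈ Finset.range M, hh M k ≤ 2 * (1 + Real.log M) := by
  have h := harmonic_le_one_add_log M
  have e : ((harmonic M : ℚ) : ℝ) = ∑ k ∈ Finset.range M, 1/((k:ℝ)+1) := by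
    simp [harmonic]
  rw [e] at h
  have e2 : ∑ k ∈ Finset.range M, 1/((M:ℝ)-k) = ∑ k ∈ Finset.range M, 1/((k:ℝ)+1) := by
    rw [← Finset.sum_range_reflect]
    refine Finset.sum_congr rfl fun k hk => ?_
    have hk := Finset.mem_range.1 hk
    congr 1
    have : ((M - 1 - k : ℕ):ℝ) = (M:ℝ) - 1 - k := by
      rw [Nat.sub_sub, Nat.cast_sub (by omega)]; push_cast; ring
    rw [this]; ring
  unfold hh
  rw [Finset.sum_add_distrib, e2]
  linarith

lemma hh_sum_n (n : ℕ) (hn : 1 ≤ n) : ∑ k ∈ Finset.range (2*(n+1)), hh (2*(n+1)) k ≤ 8 * Real.log ((n:ℝ)+1) := by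
  have h := hh_sum (2*(n+1))
  have hn' : (1:ℝ) ≤ n := by exact_mod_cast hn
  push_cast at h
  rw [Real.log_mul (by norm_num) (by positivity)] at h
  have h2 : Real.log 2 ≤ Real.log ((n:ℝ)+1) := Real.log_le_log (by norm_num) (by linarith)
  have h3 := Real.log_two_gt_d9
  linarith

lemma cs_bound (p α β : ℝ) (n : ℕ) (hn : 1 ≤ n) (F : ℕ → ℝ) (K : ℝ)
    (hK : ∑ k ∈ Finset.range (2*(n+1)), |F k|^(2*p) * (om α β (2*(n+1)) k^(2*p) * el (2*(n+1)) k) ≤ K) :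
    ∑ k ∈ Finset.range (2*(n+1)), |F k|^p * (om α β (2*(n+1)) k^p * el (2*(n+1)) k * hh (2*(n+1)) k) ≤
      Real.sqrt (8*K) * ((n:ℝ)⁻¹ * Real.sqrt (Real.log ((n:ℝ)+1))) := by
  have hn' : (1:ℝ) ≤ n := by exact_mod_cast hn
  have hK0 : 0 ≤ K := by
    refine le_trans (Finset.sum_nonneg fun k hk => ?_) hK
    have := om_nonneg α β _ _ (Finset.mem_range.1 hk)
    have := el_nonneg _ _ (Finset.mem_range.1 hk)
    positivity
  have hL : 0 ≤ Real.log ((n:ℝ)+1) := Real.log_nonneg (by linarith)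
  have h := Finset.sum_sq_le_sum_mul_sum_of_sq_eq_mul (Finset.range (2*(n+1)))
    (r := fun k => |F k|^p * (om α β (2*(n+1)) k^p * el (2*(n+1)) k * hh (2*(n+1)) k))
    (f := fun k => |F k|^(2*p) * (om α β (2*(n+1)) k^(2*p) * el (2*(n+1)) k))
    (g := fun k => el (2*(n+1)) k * hh (2*(n+1)) k * hh (2*(n+1)) k)
    (fun k hk => by
      have := om_nonneg α β _ _ (Finset.mem_range.1 hk)
      have := el_nonneg _ _ (Finset.mem_range.1 hk)
      positivity)
    (fun k hk => by
      have := el_nonneg _ _ (Finset.mem_range.1 hk)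
      have := hh_nonneg _ _ (Finset.mem_range.1 hk)
      positivity)
    (fun k hk => by
      have h0 := om_nonneg α β _ _ (Finset.mem_range.1 hk)
      have e1 : ∀ x : ℝ, 0 ≤ x → x^(2*p) = (x^p)^2 := fun x hx => by
        rw [mul_comm, Real.rpow_mul hx]; norm_cast
      rw [e1 _ (abs_nonneg _), e1 _ h0]
      ring)
  have hg : ∑ k ∈ Finset.range (2*(n+1)), el (2*(n+1)) k * hh (2*(n+1)) k * hh (2*(n+1)) k ≤
      8 * (((n:ℝ)⁻¹)^2 * Real.log ((n:ℝ)+1)) := by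
    calc _ = ((((2*(n+1):ℕ):ℝ)+1)/((2*(n+1):ℕ):ℝ)^3) * ∑ k ∈ Finset.range (2*(n+1)), hh (2*(n+1)) k := by
          rw [Finset.mul_sum]
          refine Finset.sum_congr rfl fun k hk => ?_
          rw [el_hh _ _ (Finset.mem_range.1 hk)]
      _ ≤ ((n:ℝ)⁻¹)^2 * (8 * Real.log ((n:ℝ)+1)) := by
          gcongr
          · exact Finset.sum_nonneg fun k hk => hh_nonneg _ _ (Finset.mem_range.1 hk)
          · rw [inv_pow, ← one_div, div_le_div_iff₀ (by positivity) (by positivity)]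
            push_cast
            nlinarith [mul_pos (show (0:ℝ) < n by linarith) (show (0:ℝ) < n by linarith), pow_pos (show (0:ℝ) < n by linarith) 3]
          · exact hh_sum_n n hn
      _ = _ := by ring
  refine (le_abs_self _).trans (abs_le_of_sq_le_sq ?_ (by positivity))
  calc _ ≤ _ := h
    _ ≤ K * (8 * (((n:ℝ)⁻¹)^2 * Real.log ((n:ℝ)+1))) := by
        apply mul_le_mul hK hg _ hK0
        exact Finset.sum_nonneg fun k hk => by
          have := el_nonneg _ _ (Finset.mem_range.1 hk)
          have := hh_nonneg _ _ (Finset.mem_range.1 hk)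
          positivity
    _ = _ := by
        rw [mul_pow, mul_pow, Real.sq_sqrt (by positivity), Real.sq_sqrt hL]; ring

lemma schur_bound (p α β : ℝ) (hp : 1 ≤ p) (hα : 0 ≤ α) (hβ : 0 ≤ β) (s : ℕ)
    (hs : (2*β*p+1)+(2*α*p+1)+2 ≤ (s:ℝ)) :
    ∃ C, 0 < C ∧ ∀ M : ℕ, 1 ≤ M → ∀ F : ℕ → ℝ, (∀ i j, i ≤ j → j < M → F j ≤ F i) →
      ∑ i ∈ Finset.range M, om α β M i ^ p * el M i *
        (∑ k ∈ Finset.range (M-1), (F k - F (k+1))/(1+|(i:ℝ)-k|)^s)^p ≤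
      C * ∑ k ∈ Finset.range M, |F k|^p * (om α β M k^p * el M k * hh M k) := by
  have hβp : 0 ≤ β * p := by positivity
  have hαp : 0 ≤ α * p := by positivity
  obtain ⟨C, hC, h⟩ := sum_by_parts p hp (2*β*p+1) (2*α*p+1) (by nlinarith) (by nlinarith)
  refine ⟨6^p*C, by positivity, fun M hM F hF => ?_⟩
  have h1 := weighted_schur p hp M (2*β*p+1) (2*α*p+1) (by nlinarith) (by nlinarith) s hs (fun k => F k - F (k+1))
    (fun k hk => by
      have hk : k + 1 < M := by omega
      linarith [hF k (k+1) (by omega) hk])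
  have h2 := h M hM F hF
  have hm : 0 ≤ ((M:ℝ)^(2*β*p+2*α*p+3))⁻¹ := by positivity
  calc _ = ((M:ℝ)^(2*β*p+2*α*p+3))⁻¹ * ∑ i ∈ Finset.range M, Wt M (2*β*p+1) (2*α*p+1) i *
        (∑ k ∈ Finset.range (M-1), (F k - F (k+1))/(1+|(i:ℝ)-k|)^s)^p := by
        rw [Finset.mul_sum]
        refine Finset.sum_congr rfl fun i hi => ?_
        rw [om_el _ _ _ _ _ (Finset.mem_range.1 hi)]; ring
    _ ≤ ((M:ℝ)^(2*β*p+2*α*p+3))⁻¹ * (6^p * (C*∑ k ∈ Finset.range M, |F k|^p*(Wt M (2*β*p+1) (2*α*p+1) k * hh M k))) := by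
        gcongr
        exact h1.trans (by gcongr)
    _ = _ := by
        rw [show ((M:ℝ)^(2*β*p+2*α*p+3))⁻¹ * (6^p * (C*∑ k ∈ Finset.range M, |F k|^p*(Wt M (2*β*p+1) (2*α*p+1) k * hh M k)))
          = 6^p*C*(((M:ℝ)^(2*β*p+2*α*p+3))⁻¹*∑ k ∈ Finset.range M, |F k|^p*(Wt M (2*β*p+1) (2*α*p+1) k * hh M k)) by ring,
          Finset.mul_sum]
        congr 1
        refine Finset.sum_congr rfl fun i hi => ?_
        rw [om_el _ _ _ _ _ (Finset.mem_range.1 hi)]; ring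

lemma lint_ge_const (g : ℝ → ℝ) (a b c l : ℝ) (hl : l ≤ b - a) (hc : 0 ≤ c)
    (h : ∀ x ∈ Icc a b, c ≤ g x) :
    ENNReal.ofReal (c * l) ≤ ∫⁻ x in Icc a b, ENNReal.ofReal (g x) := by
  calc ENNReal.ofReal (c * l) ≤ ENNReal.ofReal c * ENNReal.ofReal (b-a) := by
        rw [← ENNReal.ofReal_mul hc]
        exact ENNReal.ofReal_le_ofReal (mul_le_mul_of_nonneg_left hl hc)
    _ = ∫⁻ x in Icc a b, ENNReal.ofReal c := by
        rw [setLIntegral_const, Real.volume_Icc]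
    _ ≤ _ := setLIntegral_mono' measurableSet_Icc fun x hx => ENNReal.ofReal_le_ofReal (h x hx)

lemma piece_lower (p α β : ℝ) (hp : 1 ≤ p) (hα : 0 ≤ α) (hβ : 0 ≤ β) (f : ℝ → ℝ) (hf : f ∈ MSet 1)
    (M k : ℕ) (hk : k < M) :
    ENNReal.ofReal (((1/8)^α*(1/8)^β*om α β M k * |f (cc M ((k:ℝ)+1/2))|)^(2*p) * (el M k/16)) ≤
      ∫⁻ x in Icc (cc M ((k:ℝ)+3/4)) (cc M ((k:ℝ)+1/4)), ENNReal.ofReal (|jacobi α β x * f x|^(2*p)) := by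
  have hM : 1 ≤ M := by omega
  have hkM : (k:ℝ)+1 ≤ M := by exact_mod_cast hk
  have hk0 : (0:ℝ) ≤ k := by positivity
  have ho := om_nonneg α β M k hk
  have hI : ∀ t, (k:ℝ) < t → t < k+1 → cc M t ∈ Ioo (-1:ℝ) 1 := fun t h1 h2 =>
    cc_Ioo M hM t (by linarith) (by linarith)
  have hin : ∀ x ∈ Icc (cc M ((k:ℝ)+3/4)) (cc M ((k:ℝ)+1/4)), x ∈ Ioo (-1:ℝ) 1 := fun x hx =>
    ⟨lt_of_lt_of_le (hI _ (by linarith) (by linarith)).1 hx.1, lt_of_le_of_lt hx.2 (hI _ (by linarith) (by linarith)).2⟩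
  have hmid := hI ((k:ℝ)+1/2) (by linarith) (by linarith)
  have hm1 := cc_anti M hM ((k:ℝ)+1/2) (k+3/4) (by linarith) (by linarith) (by linarith)
  have hm2 := cc_anti M hM ((k:ℝ)+1/4) (k+1/2) (by linarith) (by linarith) (by linarith)
  have key : ∀ x ∈ Icc (cc M ((k:ℝ)+3/4)) (cc M ((k:ℝ)+1/4)), |f (cc M ((k:ℝ)+1/2))| ≤ |f x| →
      ((1/8)^α*(1/8)^β*om α β M k * |f (cc M ((k:ℝ)+1/2))|)^(2*p) ≤ |jacobi α β x * f x|^(2*p) := by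
    intro x hx h
    have hj := geo_lower α β hα hβ M k hk x hx
    have h8 : 0 ≤ (1/8:ℝ)^α*(1/8)^β*om α β M k := by positivity
    have hj0 := h8.trans hj
    rw [abs_mul, abs_of_nonneg hj0]
    gcongr
  by_cases hs : 0 ≤ f (cc M ((k:ℝ)+1/2))
  · refine (lint_ge_const _ (cc M ((k:ℝ)+1/2)) (cc M ((k:ℝ)+1/4)) _ _ ?_ (by positivity) fun x hx => ?_).trans
      (lintegral_mono_set (Icc_subset_Icc_left hm1))
    · have := len_lower M k hk (k+1/4) le_rfl (by linarith)
      rwa [show (k:ℝ)+1/4+1/4 = k+1/2 by ring] at this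
    · have hx' : x ∈ Icc (cc M ((k:ℝ)+3/4)) (cc M ((k:ℝ)+1/4)) := ⟨hm1.trans hx.1, hx.2⟩
      apply key x hx'
      have := monotone_of_mset f hf _ x hmid (hin x hx') hx.1
      rw [abs_of_nonneg hs, abs_of_nonneg (hs.trans this)]; exact this
  · push Not at hs
    refine (lint_ge_const _ (cc M ((k:ℝ)+3/4)) (cc M ((k:ℝ)+1/2)) _ _ ?_ (by positivity) fun x hx => ?_).trans
      (lintegral_mono_set (Icc_subset_Icc_right hm2))
    · have := len_lower M k hk (k+1/2) (by linarith) le_rfl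
      rwa [show (k:ℝ)+1/2+1/4 = k+3/4 by ring] at this
    · have hx' : x ∈ Icc (cc M ((k:ℝ)+3/4)) (cc M ((k:ℝ)+1/4)) := ⟨hx.1, hx.2.trans hm2⟩
      apply key x hx'
      have := monotone_of_mset f hf x _ (hin x hx') hmid hx.2
      rw [abs_of_neg hs, abs_of_neg (this.trans_lt hs)]; linarith

lemma disc_norm (p α β : ℝ) (hp : 1 ≤ p) (hα : 0 ≤ α) (hβ : 0 ≤ β) : ∃ K, 0 < K ∧ ∀ (f : ℝ → ℝ) (_ : f ∈ MSet 1)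
    (_ : ∫⁻ x in Icc (-1:ℝ) 1, ENNReal.ofReal (|jacobi α β x * f x|^(2*p)) ≤ 1) (M : ℕ) (_ : 1 ≤ M),
    ∑ k ∈ Finset.range M, |f (cc M ((k:ℝ)+1/2))|^(2*p) * (om α β M k^(2*p) * el M k) ≤ K := by
  refine ⟨16 * ((((1/8:ℝ)^α*(1/8)^β)^(2*p)))⁻¹, by positivity, fun f hf hn M hM => ?_⟩
  set c := (((1/8:ℝ)^α*(1/8)^β)^(2*p)) with hc
  have hc0 : 0 < c := by positivity
  have hnn : ∀ k ∈ Finset.range M, 0 ≤ ((1/8)^α*(1/8)^β*om α β M k * |f (cc M ((k:ℝ)+1/2))|)^(2*p) * (el M k/16) :=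
    fun k hk => by
      have := om_nonneg α β _ _ (Finset.mem_range.1 hk)
      have := el_nonneg _ _ (Finset.mem_range.1 hk)
      positivity
  have h1 : ∑ k ∈ Finset.range M, ((1/8)^α*(1/8)^β*om α β M k * |f (cc M ((k:ℝ)+1/2))|)^(2*p) * (el M k/16) ≤ 1 := by
    rw [← ENNReal.ofReal_le_ofReal_iff zero_le_one, ENNReal.ofReal_sum_of_nonneg hnn, ENNReal.ofReal_one]
    refine le_trans (Finset.sum_le_sum fun k hk => piece_lower p α β hp hα hβ f hf M k (Finset.mem_range.1 hk)) ?_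
    rw [← lintegral_biUnion_finset _ (fun k _ => measurableSet_Icc)]
    · refine (lintegral_mono_set ?_).trans hn
      refine iUnion₂_subset fun k hk x hx => ?_
      have hkM : (k:ℝ)+1 ≤ M := by exact_mod_cast Finset.mem_range.1 hk
      have hk0 : (0:ℝ) ≤ k := by positivity
      exact ⟨(cc_Ioo M hM _ (by linarith) (by linarith)).1.le.trans hx.1,
        hx.2.trans (cc_Ioo M hM _ (by linarith) (by linarith)).2.le⟩
    · have : ∀ i j : ℕ, i < j → j < M → Disjoint (Icc (cc M ((i:ℝ)+3/4)) (cc M ((i:ℝ)+1/4)))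
          (Icc (cc M ((j:ℝ)+3/4)) (cc M ((j:ℝ)+1/4))) := fun i j hij hj => by
        have hij' : (i:ℝ)+1 ≤ j := by exact_mod_cast hij
        have hj' : (j:ℝ)+1 ≤ M := by exact_mod_cast hj
        have := cc_anti_strict M hM ((i:ℝ)+3/4) (j+1/4) (by positivity) (by linarith) (by linarith)
        rw [Set.disjoint_left]
        intro x hx hx'
        linarith [hx.1, hx'.2]
      intro i hi j hj hij
      have hi := Finset.mem_range.1 (Finset.mem_coe.1 hi)
      have hj := Finset.mem_range.1 (Finset.mem_coe.1 hj)
      rcases lt_or_gt_of_ne hij with h | h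
      · exact this i j h hj
      · exact (this j i h hi).symm
  have e : ∑ k ∈ Finset.range M, ((1/8)^α*(1/8)^β*om α β M k * |f (cc M ((k:ℝ)+1/2))|)^(2*p) * (el M k/16) =
      c/16 * ∑ k ∈ Finset.range M, |f (cc M ((k:ℝ)+1/2))|^(2*p) * (om α β M k^(2*p) * el M k) := by
    rw [Finset.mul_sum]
    refine Finset.sum_congr rfl fun k hk => ?_
    have := om_nonneg α β _ _ (Finset.mem_range.1 hk)
    rw [Real.mul_rpow (by positivity) (by positivity), Real.mul_rpow (by positivity) (by positivity)]
    ring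
  rw [e] at h1
  rw [← div_eq_mul_inv, le_div_iff₀ hc0]
  linarith

lemma cell_int (p α β : ℝ) (hp : 1 ≤ p) (hα : 0 ≤ α) (hβ : 0 ≤ β) (f P : ℝ → ℝ) (M i : ℕ) (hi : i < M)
    (hn : ∫⁻ x in Icc (-1:ℝ) 1, ENNReal.ofReal (|jacobi α β x * f x|^(2*p)) ≤ 1)
    (Fi S K e : ℝ) (hS : 0 ≤ S) (hK : 0 ≤ K) (he : e = 0 ∨ (e = 1 ∧ el M i = 1/(M:ℝ)^2))
    (hpt : ∀ x ∈ Icc (cc M ((i:ℝ)+1)) (cc M i), x ∈ Ioo (-1:ℝ) 1 → |f x - P x| ≤ K*S + e*(|f x| + |Fi|)) :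
    ∫⁻ x in Icc (cc M ((i:ℝ)+1)) (cc M i) ∩ Ioo (-1:ℝ) 1, ENNReal.ofReal (|jacobi α β x * (f x - P x)|^p) ≤
      ENNReal.ofReal (4^p*(20*(5^α*5^β*K)^p*(om α β M i^p*el M i*S^p) +
        e*(20*(5^α*5^β)^p*(|Fi|^p*(om α β M i^p*el M i)) + 21/M))) := by
  have hM : 1 ≤ M := by omega
  have hM' : (0:ℝ) < M := by positivity
  have ho := om_nonneg α β M i hi
  have hel := el_nonneg M i hi
  have hp0 : 0 ≤ p := by linarith
  set c5 : ℝ := 5^α*5^β with hc5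
  have hc50 : 0 < c5 := by positivity
  have hms : MeasurableSet (Icc (cc M ((i:ℝ)+1)) (cc M i) ∩ Ioo (-1:ℝ) 1) := measurableSet_Icc.inter measurableSet_Ioo
  have hvol : volume (Icc (cc M ((i:ℝ)+1)) (cc M i) ∩ Ioo (-1:ℝ) 1) ≤ ENNReal.ofReal (20*el M i) := by
    refine (measure_mono inter_subset_left).trans ?_
    rw [Real.volume_Icc]
    exact ENNReal.ofReal_le_ofReal (len_upper M i hi)
  have h4 : (1:ℝ) ≤ 4^p := Real.one_le_rpow (by norm_num) hp0
  rcases he with rfl | ⟨rfl, he⟩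
  · calc _ ≤ ∫⁻ x in Icc (cc M ((i:ℝ)+1)) (cc M i) ∩ Ioo (-1:ℝ) 1, ENNReal.ofReal ((c5*om α β M i*(K*S))^p) := by
          refine setLIntegral_mono' hms fun x hx => ENNReal.ofReal_le_ofReal ?_
          have hj := geo_upper α β hα hβ M i hi x hx.1
          have h := hpt x hx.1 hx.2
          rw [zero_mul, add_zero] at h
          rw [abs_mul, abs_of_nonneg hj.1]
          have := hj.1
          gcongr
          exact hj.2
      _ ≤ ENNReal.ofReal ((c5*om α β M i*(K*S))^p) * ENNReal.ofReal (20*el M i) := by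
          rw [setLIntegral_const]; gcongr
      _ = ENNReal.ofReal (20*(c5*K)^p*(om α β M i^p*el M i*S^p)) := by
          rw [← ENNReal.ofReal_mul (by positivity)]
          congr 1
          rw [show c5*om α β M i*(K*S) = (c5*K)*om α β M i*S by ring, Real.mul_rpow (by positivity) hS,
            Real.mul_rpow (by positivity) ho]
          ring
      _ ≤ _ := by
          apply ENNReal.ofReal_le_ofReal
          rw [zero_mul, add_zero]
          exact le_mul_of_one_le_left (by positivity) h4
  · have e4 : (4:ℝ)^p = 2^p*2^p := by
      rw [← Real.mul_rpow (by norm_num) (by norm_num)]; norm_num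
    calc _ ≤ ∫⁻ x in Icc (cc M ((i:ℝ)+1)) (cc M i) ∩ Ioo (-1:ℝ) 1,
            (ENNReal.ofReal (4^p*((c5*om α β M i*(K*S))^p + (c5*om α β M i*|Fi|)^p + M)) +
              ENNReal.ofReal (4^p/M) * ENNReal.ofReal (|jacobi α β x * f x|^(2*p))) := by
          refine setLIntegral_mono' hms fun x hx => ?_
          rw [← ENNReal.ofReal_mul (by positivity), ← ENNReal.ofReal_add (by positivity) (by positivity)]
          apply ENNReal.ofReal_le_ofReal
          have hj := geo_upper α β hα hβ M i hi x hx.1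
          have h := hpt x hx.1 hx.2
          rw [one_mul] at h
          have hj0 := hj.1
          rw [abs_mul, abs_mul, abs_of_nonneg hj.1]
          have t1 : jacobi α β x * |f x - P x| ≤ c5*om α β M i*(K*S) + (c5*om α β M i*|Fi| + jacobi α β x*|f x|) := by
            calc _ ≤ jacobi α β x * (K*S + (|f x| + |Fi|)) := by gcongr
              _ = jacobi α β x * (K*S) + (jacobi α β x*|Fi| + jacobi α β x*|f x|) := by ring
              _ ≤ _ := by
                have := hj.2
                gcongr
          have h2p : (1:ℝ) ≤ 2^p := Real.one_le_rpow (by norm_num) hp0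
          set y := jacobi α β x*|f x| with hy
          have hy0 : 0 ≤ y := by positivity
          have hyy : y^p ≤ M + y^(2*p)/M := by
            have e1 : y^(2*p) = (y^p)^2 := by
              rw [mul_comm, Real.rpow_mul hy0]; norm_cast
            rw [e1]
            have : 0 ≤ y^p := by positivity
            generalize y^p = z at *
            rw [← sub_nonneg]
            have : (M:ℝ) + z^2/M - z = ((M - z)^2 + M*z)/M := by field_simp; ring
            rw [this]
            positivity
          calc (jacobi α β x * |f x - P x|)^p ≤ (c5*om α β M i*(K*S) + (c5*om α β M i*|Fi| + y))^p := by gcongr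
            _ ≤ 2^p*((c5*om α β M i*(K*S))^p + (c5*om α β M i*|Fi| + y)^p) :=
              add_rpow_le_two p hp0 _ _ (by positivity) (by positivity)
            _ ≤ 2^p*(2^p*(c5*om α β M i*(K*S))^p + 2^p*((c5*om α β M i*|Fi|)^p + y^p)) := by
              gcongr
              · exact le_mul_of_one_le_left (by positivity) h2p
              · exact add_rpow_le_two p hp0 _ _ (by positivity) (by positivity)
            _ = 4^p*((c5*om α β M i*(K*S))^p + (c5*om α β M i*|Fi|)^p + y^p) := by rw [e4]; ring
            _ ≤ 4^p*((c5*om α β M i*(K*S))^p + (c5*om α β M i*|Fi|)^p + (M + y^(2*p)/M)) := by gcongr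
            _ = _ := by ring
      _ ≤ ENNReal.ofReal (4^p*((c5*om α β M i*(K*S))^p + (c5*om α β M i*|Fi|)^p + M)) * ENNReal.ofReal (20*el M i) +
          ENNReal.ofReal (4^p/M) * 1 := by
          rw [lintegral_add_left measurable_const, setLIntegral_const, lintegral_const_mul' _ _ ENNReal.ofReal_ne_top]
          gcongr
          refine (lintegral_mono_set ?_).trans hn
          exact fun x hx => ⟨hx.2.1.le, hx.2.2.le⟩
      _ = _ := by
          rw [mul_one, ← ENNReal.ofReal_mul (by positivity), ← ENNReal.ofReal_add (by positivity) (by positivity)]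
          congr 1
          rw [show c5*om α β M i*(K*S) = (c5*K)*om α β M i*S by ring, Real.mul_rpow (by positivity) hS,
            Real.mul_rpow (by positivity) ho, Real.mul_rpow (by positivity) (abs_nonneg _), Real.mul_rpow (by positivity) ho]
          rw [he]
          field_simp
          ring

def ee (M i : ℕ) : ℝ := if i = 0 ∨ i + 1 = M then 1 else 0

lemma ee_cases (M i : ℕ) (hi : i < M) : ee M i = 0 ∨ (ee M i = 1 ∧ el M i = 1/(M:ℝ)^2) := by
  have hM' : (0:ℝ) < M := by have : 0 < M := by omega
                             positivity
  by_cases h : i = 0 ∨ i + 1 = M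
  · right
    refine ⟨by simp [ee, h], ?_⟩
    unfold el
    rcases h with rfl | h
    · simp; field_simp
    · have e : (M:ℝ) = i + 1 := by exact_mod_cast h.symm
      rw [← e, show (M:ℝ) - i = 1 by rw [e]; ring]
      field_simp
  · left; simp [ee, h]

lemma ee_nonneg (M i : ℕ) : 0 ≤ ee M i := by unfold ee; split_ifs <;> norm_num

lemma ee_le_hh (M i : ℕ) (hi : i < M) : ee M i ≤ hh M i := by
  have h0 := hh_nonneg M i hi
  have h1 : (i:ℝ)+1 ≤ M := by exact_mod_cast hi
  have h2 : 0 < (M:ℝ) - i := by linarith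
  unfold ee
  split_ifs with h
  · unfold hh
    rcases h with rfl | h
    · have : (0:ℝ) ≤ 1 / ((M:ℝ) - (0:ℕ)) := by positivity
      simp at this ⊢
    · have e : (M:ℝ) = i + 1 := by exact_mod_cast h.symm
      rw [show (M:ℝ) - i = 1 by rw [e]; ring]
      have : (0:ℝ) ≤ 1/((i:ℝ)+1) := by positivity
      linarith
  · exact h0

lemma ee_sum (M : ℕ) : ∑ i ∈ Finset.range M, ee M i ≤ 2 := by
  calc _ ≤ ∑ i ∈ Finset.range M, ((if i = 0 then (1:ℝ) else 0) + (if i = M - 1 then 1 else 0)) := by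
        refine Finset.sum_le_sum fun i hi => ?_
        have hi := Finset.mem_range.1 hi
        unfold ee
        split_ifs <;> first | (exfalso; omega) | norm_num
    _ ≤ 2 := by
        rw [Finset.sum_add_distrib, Finset.sum_ite_eq', Finset.sum_ite_eq']
        split_ifs <;> norm_num

lemma F_anti (f : ℝ → ℝ) (hf : f ∈ MSet 1) (M : ℕ) (i j : ℕ) (hij : i ≤ j) (hj : j < M) :
    f (cc M ((j:ℝ)+1/2)) ≤ f (cc M ((i:ℝ)+1/2)) := by
  have hM : 1 ≤ M := by omega
  have h1 : (j:ℝ)+1 ≤ M := by exact_mod_cast hj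
  have h2 : (i:ℝ) ≤ j := by exact_mod_cast hij
  have h3 : (0:ℝ) ≤ i := by positivity
  apply monotone_of_mset f hf _ _ (cc_Ioo M hM _ (by linarith) (by linarith)) (cc_Ioo M hM _ (by linarith) (by linarith))
  exact cc_anti M hM _ _ (by linarith) (by linarith) (by linarith)

lemma cell_pt (f : ℝ → ℝ) (hf : f ∈ MSet 1) (M i s : ℕ) (hi : i < M) (x Px C S : ℝ) (hC : 0 ≤ C)
    (hx : x ∈ Icc (cc M ((i:ℝ)+1)) (cc M i)) (hx1 : x ∈ Ioo (-1:ℝ) 1)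
    (hS : S = ∑ k ∈ Finset.range (M-1), (f (cc M ((k:ℝ)+1/2)) - f (cc M (((k+1:ℕ):ℝ)+1/2))) / (1+|(i:ℝ)-k|)^s)
    (hP : |f (cc M ((i:ℝ)+1/2)) - Px| ≤ 6*C*S) :
    0 ≤ S ∧ |f x - Px| ≤ (6*C+2^s+1)*S + ee M i*(|f x| + |f (cc M ((i:ℝ)+1/2))|) := by
  have hM : 1 ≤ M := by omega
  have hiM : (i:ℝ)+1 ≤ M := by exact_mod_cast hi
  have hi0 : (0:ℝ) ≤ i := by positivity
  have hterm : ∀ k ∈ Finset.range (M-1), 0 ≤ (f (cc M ((k:ℝ)+1/2)) - f (cc M (((k+1:ℕ):ℝ)+1/2))) / (1+|(i:ℝ)-k|)^s := by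
    intro k hk
    have hk := Finset.mem_range.1 hk
    have := F_anti f hf M k (k+1) (by omega) (by omega)
    apply div_nonneg (by linarith) (by positivity)
  have hS0 : 0 ≤ S := by rw [hS]; exact Finset.sum_nonneg hterm
  refine ⟨hS0, ?_⟩
  have tri : |f x - Px| ≤ |f x - f (cc M ((i:ℝ)+1/2))| + |f (cc M ((i:ℝ)+1/2)) - Px| := abs_sub_le _ _ _
  by_cases h : i = 0 ∨ i + 1 = M
  · have e : ee M i = 1 := by simp [ee, h]
    rw [e]
    have := abs_sub (f x) (f (cc M ((i:ℝ)+1/2)))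
    have h2 : 0 ≤ (2^s+1)*S := by positivity
    linarith
  · push Not at h
    have e : ee M i = 0 := by simp [ee, h]
    rw [e, zero_mul, add_zero]
    obtain ⟨j, rfl⟩ : ∃ j, i = j+1 := ⟨i-1, by omega⟩
    have s1 := Finset.single_le_sum hterm (Finset.mem_range.2 (show j < M-1 by omega))
    have s2 := Finset.single_le_sum hterm (Finset.mem_range.2 (show j+1 < M-1 by omega))
    rw [← hS] at s1 s2
    have e1 : 1 + |((j+1:ℕ):ℝ) - j| = 2 := by
      rw [show ((j+1:ℕ):ℝ) - j = 1 by push_cast; ring]; norm_num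
    have e2 : 1 + |((j+1:ℕ):ℝ) - (j+1:ℕ)| = 1 := by simp
    rw [e1, div_le_iff₀ (by positivity)] at s1
    rw [e2, one_pow, div_one] at s2
    have hiM2 : ((j+1+1:ℕ):ℝ)+1 ≤ M := by
      have : j+1+1+1 ≤ M := by omega
      exact_mod_cast this
    push_cast at *
    have hj0 : (0:ℝ) ≤ j := by positivity
    have m1 : f x ≤ f (cc M ((j:ℝ)+1/2)) := by
      apply monotone_of_mset f hf _ _ hx1 (cc_Ioo M hM _ (by linarith) (by linarith))
      exact hx.2.trans (cc_anti M hM _ _ (by linarith) (by linarith) (by linarith))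
    have m2 : f (cc M ((j:ℝ)+1+1+1/2)) ≤ f x := by
      apply monotone_of_mset f hf _ _ (cc_Ioo M hM _ (by linarith) (by linarith)) hx1
      exact (cc_anti M hM _ _ (by linarith) (by linarith) (by linarith)).trans hx.1
    have h2s : 0 ≤ 2^s*S := by positivity
    have a1 := F_anti f hf M j (j+1) (by omega) (by omega)
    have a2 := F_anti f hf M (j+1) (j+1+1) (by omega) (by omega)
    push_cast at a1 a2
    have : |f x - f (cc M ((j:ℝ)+1+1/2))| ≤ 2^s*S + S := by
      rw [abs_le]; constructor <;> linarith
    linarith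

lemma cells_cover (g : ℝ → ℝ≥0∞) (M : ℕ) (hM : 1 ≤ M) :
    ∫⁻ x in Icc (-1:ℝ) 1, g x ≤
      ∑ i ∈ Finset.range M, ∫⁻ x in Icc (cc M ((i:ℝ)+1)) (cc M i) ∩ Ioo (-1:ℝ) 1, g x := by
  have hM' : (0:ℝ) < M := by positivity
  rw [← Measure.restrict_congr_set (Ioo_ae_eq_Icc (μ := volume) (a := (-1:ℝ)) (b := 1))]
  have hcov : Ioo (-1:ℝ) 1 ⊆ ⋃ i : Fin M, Icc (cc M (((i:ℕ):ℝ)+1)) (cc M (i:ℕ)) ∩ Ioo (-1:ℝ) 1 := by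
    intro x hx
    obtain ⟨t, ht, e⟩ := cc_param M hM 0 M le_rfl hM'.le le_rfl x (by rw [cc_zero, cc_top M hM]; exact ⟨hx.1.le, hx.2.le⟩)
    have htM : t < M := by
      rcases ht.2.lt_or_eq with h | h
      · exact h
      · rw [e, h, cc_top M hM] at hx; exact absurd hx.1 (lt_irrefl _)
    have hfl : ⌊t⌋₊ < M := (Nat.floor_lt ht.1).2 htM
    rw [mem_iUnion]
    refine ⟨⟨⌊t⌋₊, hfl⟩, ?_, hx⟩
    have h1 := Nat.floor_le ht.1
    have h2 := Nat.lt_floor_add_one t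
    have h3 : ((⌊t⌋₊:ℕ):ℝ)+1 ≤ M := by exact_mod_cast hfl
    rw [e]
    exact ⟨cc_anti M hM _ _ ht.1 h2.le h3, cc_anti M hM _ _ (by positivity) h1 htM.le⟩
  refine (lintegral_mono_set hcov).trans ((lintegral_iUnion_le _ _).trans ?_)
  rw [tsum_fintype, ← Fin.sum_univ_eq_sum_range (fun i : ℕ => ∫⁻ x in Icc (cc M ((i:ℝ)+1)) (cc M i) ∩ Ioo (-1:ℝ) 1, g x)]

lemma upper_core (p α β : ℝ) (hp : 1 ≤ p) (hα : 0 ≤ α) (hβ : 0 ≤ β) : ∃ C, 0 < C ∧ ∀ n : ℕ, 1 ≤ n →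
    ∀ (f : ℝ → ℝ) (_ : f ∈ MSet 1)
    (_ : ∫⁻ x in Icc (-1:ℝ) 1, ENNReal.ofReal (|jacobi α β x * f x|^(2*p)) ≤ 1),
    ∃ P : Polynomial ℝ, P.natDegree ≤ n ∧
      ∫⁻ x in Icc (-1:ℝ) 1, ENNReal.ofReal (|jacobi α β x * (f x - P.eval x)|^p) ≤
        ENNReal.ofReal (C * ((n:ℝ)⁻¹ * Real.sqrt (Real.log ((n:ℝ)+1)))) := by
  obtain ⟨s, hs⟩ := exists_nat_ge ((2*β*p+1)+(2*α*p+1)+2)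
  have hs2 : 2 ≤ s := by
    have : 0 ≤ β*p := by positivity
    have : 0 ≤ α*p := by positivity
    have : (2:ℝ) ≤ s := by nlinarith
    exact_mod_cast this
  obtain ⟨C0, hC0, hker⟩ := kernel s (by omega)
  obtain ⟨K, hK, hdisc⟩ := disc_norm p α β hp hα hβ
  obtain ⟨C1, hC1, hsch⟩ := schur_bound p α β hp hα hβ s hs
  set K2 := 6*C0+2^s+1 with hK2
  have hK20 : 0 < K2 := by positivity
  set c5 : ℝ := 5^α*5^β with hc5
  have hc50 : 0 < c5 := by positivity
  refine ⟨4^p*(20*(c5*K2)^p*C1*Real.sqrt (8*K) + 20*c5^p*Real.sqrt (8*K) + 84), by positivity, fun n hn f hf hnorm => ?_⟩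
  obtain ⟨Λ, hdeg, hone, hpos, hdec⟩ := hker n
  obtain ⟨M, hM⟩ : ∃ M, M = 2*(n+1) := ⟨_, rfl⟩
  have hM1 : 1 ≤ M := by omega
  obtain ⟨F, hF⟩ : ∃ F : ℕ → ℝ, F = fun k : ℕ => f (cc M ((k:ℝ)+1/2)) := ⟨_, rfl⟩
  have hFa : ∀ i j, i ≤ j → j < M → F j ≤ F i := fun i j hij hj => by rw [hF]; exact F_anti f hf M i j hij hj
  obtain ⟨S, hSd⟩ : ∃ S : ℕ → ℝ, S = fun i : ℕ => ∑ k ∈ Finset.range (M-1), (F k - F (k+1))/(1+|(i:ℝ)-k|)^s := ⟨_, rfl⟩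
  rw [← hM] at hone hdec
  have hS0 : ∀ i, 0 ≤ S i := fun i => by
    rw [hSd]
    refine Finset.sum_nonneg fun k hk => ?_
    have hk := Finset.mem_range.1 hk
    have := hFa k (k+1) (by omega) (by omega)
    exact div_nonneg (by linarith) (by positivity)
  refine ⟨∑ j ∈ Finset.range M, Polynomial.C (F j) * Λ j, ?_, ?_⟩
  · refine Polynomial.natDegree_sum_le_of_forall_le _ _ fun j _ => ?_
    exact (Polynomial.natDegree_C_mul_le _ _).trans (hdeg j)
  set P := ∑ j ∈ Finset.range M, Polynomial.C (F j) * Λ j with hP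
  have hcell : ∀ i ∈ Finset.range M, ∫⁻ x in Icc (cc M ((i:ℝ)+1)) (cc M i) ∩ Ioo (-1:ℝ) 1,
      ENNReal.ofReal (|jacobi α β x * (f x - P.eval x)|^p) ≤
      ENNReal.ofReal (4^p*(20*(c5*K2)^p*(om α β M i^p*el M i*S i^p) +
        ee M i*(20*c5^p*(|F i|^p*(om α β M i^p*el M i)) + 21/M))) := by
    intro i hi
    have hi := Finset.mem_range.1 hi
    refine cell_int p α β hp hα hβ f (fun x => P.eval x) M i hi hnorm (F i) (S i) K2 (ee M i) (hS0 i) hK20.le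
      (ee_cases M i hi) fun x hx hx1 => ?_
    have hiM : (i:ℝ)+1 ≤ M := by exact_mod_cast hi
    obtain ⟨t, ht, e⟩ := cc_param M hM1 i (i+1) (by positivity) (by linarith) hiM x hx
    have hpw := pointwise M F hFa s hs2 C0 hC0.le (fun j => (Λ j).eval x) (fun j => by rw [e]; exact hpos j _)
      (by rw [e]; exact hone _) i hi (fun j hj => by
        rw [e]
        refine hdec i j hi hj _ ⟨?_, ?_⟩
        · have := Real.pi_pos; exact mul_le_mul_of_nonneg_right ht.1 (by positivity)
        · have := Real.pi_pos; exact mul_le_mul_of_nonneg_right ht.2 (by positivity))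
    have hPe : P.eval x = ∑ j ∈ Finset.range M, F j * (Λ j).eval x := by
      rw [hP, Polynomial.eval_finsetSum]
      simp
    rw [← hPe] at hpw
    have := (cell_pt f hf M i s hi x (P.eval x) C0 (S i) hC0.le hx hx1 (by rw [hSd, hF]) (by
      rw [hSd, hF]; rw [hF] at hpw; exact hpw)).2
    rw [hF]; exact this
  refine (cells_cover _ M hM1).trans ((Finset.sum_le_sum hcell).trans ?_)
  have hnn : ∀ i ∈ Finset.range M, 0 ≤ om α β M i ∧ 0 ≤ el M i := fun i hi =>
    ⟨om_nonneg α β M i (Finset.mem_range.1 hi), el_nonneg M i (Finset.mem_range.1 hi)⟩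
  rw [← ENNReal.ofReal_sum_of_nonneg (fun i hi => by
    obtain ⟨h1, h2⟩ := hnn i hi
    have := hS0 i
    have := ee_nonneg M i
    positivity)]
  apply ENNReal.ofReal_le_ofReal
  obtain ⟨A, hA⟩ : ∃ A, A = ∑ k ∈ Finset.range M, |F k|^p * (om α β M k^p * el M k * hh M k) := ⟨_, rfl⟩
  have hn' : (1:ℝ) ≤ n := by exact_mod_cast hn
  set L := (n:ℝ)⁻¹ * Real.sqrt (Real.log ((n:ℝ)+1)) with hL
  have hA1 : A ≤ Real.sqrt (8*K) * L := by
    rw [hA, hL, hM]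
    have := hdisc f hf hnorm M hM1
    apply cs_bound p α β n hn F K
    rw [← hM, hF]; exact this
  have hA2 := hsch M hM1 F hFa
  rw [← hA] at hA2
  have hML : (1:ℝ)/M ≤ 2 * L := by
    have h2 : Real.log 2 ≤ Real.log ((n:ℝ)+1) := Real.log_le_log (by norm_num) (by linarith)
    have h3 := Real.log_two_gt_d9
    have h4 : (1/2:ℝ) ≤ Real.sqrt (Real.log ((n:ℝ)+1)) := by
      apply Real.le_sqrt_of_sq_le; norm_num; linarith
    have h5 : (1:ℝ)/M ≤ (n:ℝ)⁻¹ := by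
      rw [← one_div, hM]; push_cast
      apply one_div_le_one_div_of_le (by linarith); linarith
    have h6 : 0 < (n:ℝ)⁻¹ := by positivity
    rw [hL]; nlinarith
  have hA3 : ∑ i ∈ Finset.range M, ee M i * (|F i|^p*(om α β M i^p*el M i)) ≤ A := by
    rw [hA]
    refine Finset.sum_le_sum fun i hi => ?_
    obtain ⟨h1, h2⟩ := hnn i hi
    have := ee_le_hh M i (Finset.mem_range.1 hi)
    calc _ ≤ hh M i * (|F i|^p*(om α β M i^p*el M i)) := by gcongr
      _ = _ := by ring
  have hE := ee_sum M
  have hM' : (0:ℝ) < M := by positivity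
  calc _ = 4^p*(20*(c5*K2)^p*(∑ i ∈ Finset.range M, om α β M i^p*el M i*S i^p) +
        20*c5^p*(∑ i ∈ Finset.range M, ee M i * (|F i|^p*(om α β M i^p*el M i))) +
          21*(1/M)*∑ i ∈ Finset.range M, ee M i) := by
        rw [Finset.mul_sum, Finset.mul_sum, Finset.mul_sum, ← Finset.sum_add_distrib, ← Finset.sum_add_distrib, Finset.mul_sum]
        refine Finset.sum_congr rfl fun i _ => ?_
        ring
    _ ≤ 4^p*(20*(c5*K2)^p*(C1*(Real.sqrt (8*K) * L)) + 20*c5^p*(Real.sqrt (8*K) * L) + 21*(2*L)*2) := by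
        have i1 : ∑ i ∈ Finset.range M, om α β M i^p*el M i*S i^p ≤ C1*(Real.sqrt (8*K) * L) := by
          refine le_trans ?_ (mul_le_mul_of_nonneg_left hA1 hC1.le)
          rw [hSd]; exact hA2
        have i2 := hA3.trans hA1
        gcongr
        exact Finset.sum_nonneg fun i _ => ee_nonneg M i
    _ = _ := by ring

lemma upper_final (q : ℝ≥0∞) (hq1 : 1 ≤ q) (hq2 : q ≠ ∞) (α β : ℝ) (hα : 0 ≤ α) (hβ : 0 ≤ β) :
    ∃ c : ℝ, 0 < c ∧ ∀ n : ℕ, 1 ≤ n → EClass (MSet 1 ∩ BSet (2 * q) α β) n (jacobi α β) q ≤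
        ENNReal.ofReal (c * (n : ℝ) ^ (-(1 / q.toReal)) *
          Real.log ((n : ℝ) + 1) ^ (1 / (2 * q.toReal))) := by
  have hq0 : q ≠ 0 := (zero_lt_one.trans_le hq1).ne'
  have hp : 1 ≤ q.toReal := by
    rw [← ENNReal.toReal_one]; exact (ENNReal.toReal_le_toReal ENNReal.one_ne_top hq2).2 hq1
  set p := q.toReal with hpd
  have hp0 : 0 < p := by linarith
  obtain ⟨C, hC, h⟩ := upper_core p α β hp hα hβ
  refine ⟨C^(1/p), by positivity, fun n hn => ?_⟩
  have hn' : (1:ℝ) ≤ n := by exact_mod_cast hn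
  refine iSup₂_le fun f hf => ?_
  have h2q : (2*q).toReal = 2*p := by rw [ENNReal.toReal_mul]; simp [hpd]
  have hnorm : ∫⁻ x in Icc (-1:ℝ) 1, ENNReal.ofReal (|jacobi α β x * f x|^(2*p)) ≤ 1 := by
    have hb := hf.2.2
    rw [LpOn_eq _ _ (mul_ne_zero (by norm_num) hq0) (ENNReal.mul_ne_top (by norm_num) hq2), h2q] at hb
    have hb2 := congrArg (fun y : ℝ≥0∞ => y^(2*p)) hb
    simp only [← ENNReal.rpow_mul, ENNReal.one_rpow] at hb2
    rw [one_div_mul_cancel (by positivity), ENNReal.rpow_one] at hb2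
    exact hb2.le
  obtain ⟨P, hdeg, hP⟩ := h n hn f hf.1 hnorm
  refine (iInf₂_le P hdeg).trans ?_
  rw [LpOn_eq _ _ hq0 hq2]
  refine (ENNReal.rpow_le_rpow hP (by positivity)).trans ?_
  have hL : 0 ≤ Real.log ((n:ℝ)+1) := Real.log_nonneg (by linarith)
  rw [ENNReal.ofReal_rpow_of_nonneg (by positivity) (by positivity)]
  apply le_of_eq
  congr 1
  rw [Real.mul_rpow hC.le (by positivity), Real.mul_rpow (by positivity) (by positivity), Real.inv_rpow (by positivity),
    ← Real.rpow_neg (by positivity), Real.sqrt_eq_rpow, ← Real.rpow_mul hL,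
    show 1/2*(1/p) = 1/(2*p) by field_simp]
  ring

theorem statement7 (q : ℝ≥0∞) (hq1 : 1 ≤ q) (hq2 : q ≠ ∞)
    (α β : ℝ) (hα : 0 ≤ α) (hβ : 0 ≤ β) :
    ∃ c₁ > (0 : ℝ), ∃ c₂ > (0 : ℝ), ∀ n : ℕ, 1 ≤ n →
      ENNReal.ofReal (c₁ * (n : ℝ) ^ (-(1 / q.toReal))) ≤
        EClass (MSet 1 ∩ BSet (2 * q) α β) n (jacobi α β) q ∧
      EClass (MSet 1 ∩ BSet (2 * q) α β) n (jacobi α β) q ≤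
        ENNReal.ofReal (c₂ * (n : ℝ) ^ (-(1 / q.toReal)) *
          Real.log ((n : ℝ) + 1) ^ (1 / (2 * q.toReal))) := by
  obtain ⟨c₁, h1, h1'⟩ := lower_final q hq1 hq2 α β hα hβ
  obtain ⟨c₂, h2, h2'⟩ := upper_final q hq1 hq2 α β hα hβ
  exact ⟨c₁, h1, c₂, h2, fun n hn => ⟨h1' n hn, h2' n hn⟩⟩
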